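/- arXiv:2003.05430 — 6 statements merged into one kernel-verified Lean document; each statement's English description precedes it below -/
import Mathlib

section
/- If there exists a periodic tiling of the plane by squares with periods (1,0) and (0,λ), where λ > 0 is irrational, then there exist rational numbers p ≥ q ≥ r ≥ 0 such that λ = p + √(q² − r²) or λ = p − √(q² − r²). -/
/-!
Why the theorem is true.

*All tiles are parallel* (`exists_common_frame`). Two non-parallel squares with disjoint interiors
share at most one point. If two directions occurred, the plane would be the union of two closed
sets, formed by the translates of the tiles of one direction and of the other tiles, whose
intersection is countable; removing a countable set from the plane leaves a connected set, which
is a contradiction. Up to quarter turns the common direction is `(c, s)` with `c > 0 ≥ s`; write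
`a = c`, `b = -s`. In the rotated coordinates the lattice is spanned by `(a, b)` and `(-λb, λa)`.

*An additive invariant* (`IsPartition.sum_eq`). For `ℚ`-linear functions `f, g : ℝ → ℝ`, assign to
an axis-parallel rectangle of width `u` and height `v` the number `f u * g v`. This is additive
under dissection and translation invariant, so its total over a finite family of rectangles whose
lattice translates partition the plane depends on the lattice only. The tiles are one such family,
and a staircase-shaped fundamental domain made of two rectangles is another
(`staircase_isPartition`). Comparing them, the sides `W i` of the tiles satisfy
`∑ f (W i) * g (W i) = f a * g (λa) + f (λb) * g b`.

*Arithmetic* (`arithmetic_core`). The left side is symmetric in `f` and `g`, and nonnegative for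
`f = g`. As `λ` is irrational, `a` and `λa` are independent over `ℚ`. Symmetry forces
`b = αa + βλa` and `λb = γa + δλa` with rational coefficients and `αδ - βγ = 1`; nonnegativity
forces `αδ ≤ 0`, `βδ ≥ 0`, `αγ ≥ 0`. Then `βλ² + (α - δ)λ - γ = 0`, and solving this equation gives
`p = (δ - α) / (2β)`, `q = |δ + α| / (2|β|)`, `r = 1 / |β|`.
-/

open Set

/-- A square in the plane: the image of `[0,s] × [0,s]` (for some `s > 0`) under an
orientation-preserving isometry of `ℝ²` (a rotation by an angle `θ` followed by a
translation by `c`). -/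
def IsSquarePlane (S : Set (ℝ × ℝ)) : Prop :=
  ∃ s : ℝ, 0 < s ∧ ∃ c : ℝ × ℝ, ∃ θ : ℝ,
    S = (fun p : ℝ × ℝ =>
      (c.1 + p.1 * Real.cos θ - p.2 * Real.sin θ,
       c.2 + p.1 * Real.sin θ + p.2 * Real.cos θ)) '' (Icc 0 s ×ˢ Icc 0 s)

/-- The lattice `L = {(m, nλ) : m, n ∈ ℤ}` generated by the rectangle `1 × λ`. -/
def latticeL (lam : ℝ) : Set (ℝ × ℝ) := {v | ∃ m n : ℤ, v = ((m : ℝ), (n : ℝ) * lam)}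

/-- A periodic tiling of the plane by squares with periods `(1,0)` and `(0,λ)`:
a finite set `Γ` of squares with pairwise disjoint interiors such that every point of
the plane is simply equivalent (difference in `L`) to a point of the union of `Γ`, and
no two distinct points of the interior of the union of `Γ` are simply equivalent. -/
def IsPeriodicSquareTiling (lam : ℝ) (Γ : Set (Set (ℝ × ℝ))) : Prop :=
  Γ.Finite ∧ (∀ S ∈ Γ, IsSquarePlane S) ∧
  (∀ S ∈ Γ, ∀ T ∈ Γ, S ≠ T → interior S ∩ interior T = ∅) ∧
  (∀ p : ℝ × ℝ, ∃ q ∈ ⋃₀ Γ, p - q ∈ latticeL lam) ∧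
  (∀ p ∈ interior (⋃₀ Γ), ∀ q ∈ interior (⋃₀ Γ), p ≠ q → p - q ∉ latticeL lam)


/-! ### Step functions and increments -/

/-- The increment of `f` over the half-open interval `[u, v)`, zero if the interval is empty. -/
noncomputable def incr (f : ℝ → ℝ) (u v : ℝ) : ℝ := if u < v then f v - f u else 0

open Classical in
/-- The real number `1` or `0` according to whether `P` holds. -/
noncomputable def ind (P : Prop) : ℝ := if P then 1 else 0

lemma ind_pos {P : Prop} (h : P) : ind P = 1 := by simp [ind, h]

lemma ind_neg {P : Prop} (h : ¬ P) : ind P = 0 := by simp [ind, h]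

lemma incr_of_le (f : ℝ → ℝ) {u v : ℝ} (h : u ≤ v) : incr f u v = f v - f u := by
  unfold incr
  rcases h.lt_or_eq with h | h
  · simp [h]
  · simp [h]

lemma incr_translate (f : ℝ →ₗ[ℚ] ℝ) (u v t : ℝ) : incr f (u + t) (v + t) = incr f u v := by
  unfold incr
  simp

open Classical in
/-- If a combination of indicators of half-open intervals vanishes, so does the same combination
of the increments of `f`: it is the sum over `t` of `f t` times the jump at `t`, up to sign. -/
lemma incr_sum_eq_zero {K : Type*} [Fintype K] (f : ℝ → ℝ) (C u v : K → ℝ)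
    (h : ∀ t, ∑ k, C k * ind (u k ≤ t ∧ t < v k) = 0) :
    ∑ k, C k * incr f (u k) (v k) = 0 := by
  -- the jump at `t` of the step function vanishes
  have hjump : ∀ t, ∑ k, C k * (if u k < v k then
      ((if v k = t then (1 : ℝ) else 0) - (if u k = t then 1 else 0)) else 0) = 0 := by
    intro t
    have hev : ∀ k, ∀ᶠ s in nhdsWithin t (Iio t),
        (if u k < v k then
          ((if v k = t then (1 : ℝ) else 0) - (if u k = t then 1 else 0)) else 0) =
        ind (u k ≤ s ∧ s < v k) - ind (u k ≤ t ∧ t < v k) := by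
      intro k
      have h1 : ∀ᶠ s in nhdsWithin t (Iio t), s < t := eventually_mem_nhdsWithin
      have h2 : ∀ w : ℝ, ∀ᶠ s in nhdsWithin t (Iio t), w < t → w < s := by
        intro w
        by_cases hw : w < t
        · filter_upwards [mem_nhdsWithin_of_mem_nhds (Ioi_mem_nhds hw)] with s hs _ using hs
        · exact Filter.Eventually.of_forall fun s hs => absurd hs hw
      filter_upwards [h1, h2 (u k), h2 (v k)] with s hs hu hv
      unfold ind
      grind
    obtain ⟨s, hs⟩ := (Filter.eventually_all.2 hev).exists
    simp_rw [hs, mul_sub, Finset.sum_sub_distrib, h, sub_zero]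
  let E : Finset ℝ := Finset.univ.image u ∪ Finset.univ.image v
  have hk : ∀ k, C k * incr f (u k) (v k) = ∑ t ∈ E, f t * (C k * (if u k < v k then
      ((if v k = t then (1 : ℝ) else 0) - (if u k = t then 1 else 0)) else 0)) := by
    intro k
    have hu : u k ∈ E := by simp [E]
    have hv : v k ∈ E := by simp [E]
    unfold incr
    split_ifs with hlt
    · simp only [mul_sub, Finset.sum_sub_distrib, mul_ite, mul_one, mul_zero,
        Finset.sum_ite_eq, hu, hv, if_true]
      ring
    · simp
  simp_rw [hk]
  rw [Finset.sum_comm]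
  simp_rw [← Finset.mul_sum, hjump]
  simp

/-- The two-dimensional version, for indicators of half-open rectangles: apply the one-dimensional
one in `x` for each fixed `y`, then in `y`. -/
lemma incr_mul_sum_eq_zero {K : Type*} [Fintype K] (f g : ℝ → ℝ) (C u v u' v' : K → ℝ)
    (h : ∀ x y, ∑ k, C k * ind ((u k ≤ x ∧ x < v k) ∧ (u' k ≤ y ∧ y < v' k)) = 0) :
    ∑ k, C k * (incr f (u k) (v k) * incr g (u' k) (v' k)) = 0 := by
  have key := incr_sum_eq_zero g (fun k => C k * incr f (u k) (v k)) u' v' (by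
    intro y
    refine Eq.trans (Finset.sum_congr rfl fun k _ => ?_)
      (incr_sum_eq_zero f (fun k => C k * ind (u' k ≤ y ∧ y < v' k)) u v fun x =>
        Eq.trans (Finset.sum_congr rfl fun k _ => ?_) (h x y))
    · ring
    · unfold ind
      split_ifs <;> first | (exfalso; tauto) | ring)
  refine Eq.trans (Finset.sum_congr rfl fun k _ => ?_) key
  ring

/-! ### The invariant of periodic partitions into rectangles -/

/-- The half-open rectangles `[X i, X₁ i) × [Y i, Y₁ i)` and all their translates by
`(t₁ z, t₂ z)`, `z ∈ ℤ²`, partition the plane. -/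
def IsPartition {ι : Type*} (t₁ t₂ : ℤ × ℤ → ℝ) (X X₁ Y Y₁ : ι → ℝ) : Prop :=
  ∀ x y, ∃! p : ι × (ℤ × ℤ), (X p.1 ≤ x - t₁ p.2 ∧ x - t₁ p.2 < X₁ p.1) ∧
    (Y p.1 ≤ y - t₂ p.2 ∧ y - t₂ p.2 < Y₁ p.1)

/-- Additivity: the product of increments over a rectangle `[u, v) × [u', v')` is the sum over the
pieces into which a periodic partition cuts it. The finite set `Z` has to contain the indices of
all translations that contribute. -/
lemma IsPartition.cut {ι : Type*} [Fintype ι] {t₁ t₂ : ℤ × ℤ → ℝ} {X X' Y Y' : ι → ℝ}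
    (hP : IsPartition t₁ t₂ X X' Y Y') (f g : ℝ → ℝ) (u v u' v' : ℝ) (Z : Finset (ℤ × ℤ))
    (hZ : ∀ i z x y, (u ≤ x ∧ x < v) ∧ (u' ≤ y ∧ y < v') →
      (X i ≤ x - t₁ z ∧ x - t₁ z < X' i) ∧ (Y i ≤ y - t₂ z ∧ y - t₂ z < Y' i) → z ∈ Z) :
    incr f u v * incr g u' v' = ∑ i, ∑ z ∈ Z,
      incr f (max u (X i + t₁ z)) (min v (X' i + t₁ z)) *
        incr g (max u' (Y i + t₂ z)) (min v' (Y' i + t₂ z)) := by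
  classical
  have key := incr_mul_sum_eq_zero (K := Option (ι × Z)) f g
    (fun k => k.elim (-1) (fun _ => 1))
    (fun k => k.elim u (fun p => max u (X p.1 + t₁ p.2)))
    (fun k => k.elim v (fun p => min v (X' p.1 + t₁ p.2)))
    (fun k => k.elim u' (fun p => max u' (Y p.1 + t₂ p.2)))
    (fun k => k.elim v' (fun p => min v' (Y' p.1 + t₂ p.2))) (by
      intro x y
      rw [Fintype.sum_option]
      simp only [Option.elim_none, Option.elim_some, max_le_iff, lt_min_iff]
      by_cases hR : (u ≤ x ∧ x < v) ∧ (u' ≤ y ∧ y < v')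
      · obtain ⟨⟨i, z⟩, hp, huniq⟩ := hP x y
        have hz := hZ i z x y hR hp
        rw [Finset.sum_eq_single (i, ⟨z, hz⟩)]
        · rw [ind_pos hR, ind_pos]
          · ring
          · simp only at hp ⊢
            grind
        · rintro ⟨i', z', hz'⟩ - hne
          rw [ind_neg, mul_zero]
          intro hcon
          have := huniq (i', z') (by simp only at hcon ⊢; grind)
          apply hne
          simp_all
        · simp
      · rw [ind_neg hR, Finset.sum_eq_zero]
        · simp
        · intro p _
          rw [ind_neg, mul_zero]
          tauto)
  rw [Fintype.sum_option] at key
  simp only [Option.elim_none, Option.elim_some, Fintype.sum_prod_type, one_mul] at key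
  rw [eq_comm, ← sub_eq_zero, ← key]
  have : ∀ i, ∑ z ∈ Z,
      incr f (max u (X i + t₁ z)) (min v (X' i + t₁ z)) *
        incr g (max u' (Y i + t₂ z)) (min v' (Y' i + t₂ z)) = ∑ z : Z,
      incr f (max u (X i + t₁ z)) (min v (X' i + t₁ z)) *
        incr g (max u' (Y i + t₂ z)) (min v' (Y' i + t₂ z)) := by
    intro i
    rw [Finset.univ_eq_attach, ← Finset.sum_attach]
  simp_rw [this]
  ring

/-- Two periodic partitions with the same period lattice have the same total invariant: cut the
rectangles of each by the other. By periodicity both totals are sums over the same intersections,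
up to translation. -/
lemma IsPartition.sum_eq {ι κ : Type*} [Fintype ι] [Fintype κ] {t₁ t₂ : ℤ × ℤ → ℝ}
    (ht₁ : ∀ z, t₁ (-z) = -t₁ z) (ht₂ : ∀ z, t₂ (-z) = -t₂ z)
    (hfin : ∀ N : ℝ, {z | |t₁ z| ≤ N ∧ |t₂ z| ≤ N}.Finite)
    {X X' Y Y' : ι → ℝ} {U U' V V' : κ → ℝ}
    (hP : IsPartition t₁ t₂ X X' Y Y') (hQ : IsPartition t₁ t₂ U U' V V')
    (f g : ℝ →ₗ[ℚ] ℝ) :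
    ∑ i, incr f (X i) (X' i) * incr g (Y i) (Y' i) =
      ∑ j, incr f (U j) (U' j) * incr g (V j) (V' j) := by
  classical
  obtain ⟨Z, hZ⟩ : ∃ Z : Finset (ℤ × ℤ), ∀ i j z x y,
      (X i ≤ x ∧ x < X' i) ∧ (Y i ≤ y ∧ y < Y' i) →
      (U j ≤ x - t₁ z ∧ x - t₁ z < U' j) ∧ (V j ≤ y - t₂ z ∧ y - t₂ z < V' j) → z ∈ Z := by
    have hf : ∀ i j, {z | ∃ x y, ((X i ≤ x ∧ x < X' i) ∧ (Y i ≤ y ∧ y < Y' i)) ∧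
      (U j ≤ x - t₁ z ∧ x - t₁ z < U' j) ∧ (V j ≤ y - t₂ z ∧ y - t₂ z < V' j)}.Finite := by
      intro i j
      refine (hfin (|X i| + |X' i| + |Y i| + |Y' i| + |U j| + |U' j| + |V j| + |V' j|)).subset ?_
      rintro z ⟨x, y, h1, h2⟩
      have a1 := abs_le.1 (le_refl |X i|)
      have a2 := abs_le.1 (le_refl |X' i|)
      have a3 := abs_le.1 (le_refl |Y i|)
      have a4 := abs_le.1 (le_refl |Y' i|)
      have a5 := abs_le.1 (le_refl |U j|)
      have a6 := abs_le.1 (le_refl |U' j|)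
      have a7 := abs_le.1 (le_refl |V j|)
      have a8 := abs_le.1 (le_refl |V' j|)
      constructor <;> rw [abs_le] <;> constructor <;> linarith
    refine ⟨(Set.finite_iUnion fun i => Set.finite_iUnion fun j => hf i j).toFinset, ?_⟩
    intro i j z x y h1 h2
    simp only [Set.Finite.mem_toFinset, Set.mem_iUnion]
    exact ⟨i, j, x, y, h1, h2⟩
  have e1 : ∀ i, _ := fun i => hQ.cut f g (X i) (X' i) (Y i) (Y' i) Z
    (fun j z x y h1 h2 => hZ i j z x y h1 h2)
  have e2 : ∀ j, _ := fun j => hP.cut f g (U j) (U' j) (V j) (V' j) (Z.map (Equiv.neg _).toEmbedding)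
    (fun i z x y h1 h2 => by
      rw [Finset.mem_map]
      refine ⟨-z, hZ i j (-z) (x - t₁ z) (y - t₂ z) h2 ?_, by simp⟩
      simpa [ht₁, ht₂] using h1)
  simp_rw [e1, e2]
  rw [Finset.sum_comm]
  refine Finset.sum_congr rfl fun j _ => Finset.sum_congr rfl fun i _ => ?_
  rw [Finset.sum_map]
  refine Finset.sum_congr rfl fun z _ => ?_
  simp only [Equiv.coe_toEmbedding, Equiv.neg_apply, ht₁, ht₂]
  rw [← incr_translate f _ _ (-t₁ z), ← incr_translate g _ _ (-t₂ z)]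
  simp only [← max_add_add_right, ← min_add_add_right, add_neg_cancel_right]
  rw [max_comm, min_comm, max_comm (Y i + _), min_comm (Y' i + _)]

/-! ### Arithmetic consequences of the invariant -/

/-- The values of a `ℚ`-linear function on a linearly independent family can be prescribed. -/
lemma exists_functional {ι : Type*} {v : ι → ℝ} (hv : LinearIndependent ℚ v) (w : ι → ℝ) :
    ∃ f : ℝ →ₗ[ℚ] ℝ, ∀ i, f (v i) = w i := by
  obtain ⟨f, hf⟩ := LinearMap.exists_extend ((Module.Basis.span hv).constr ℚ w)
  refine ⟨f, fun i => ?_⟩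
  have := LinearMap.congr_fun hf (Module.Basis.span hv i)
  rw [Module.Basis.constr_basis] at this
  simpa [Module.Basis.span_apply] using this

lemma linInd_pair {lam a : ℝ} (hirr : Irrational lam) (ha : a ≠ 0) :
    LinearIndependent ℚ ![a, lam * a] := by
  rw [LinearIndependent.pair_iff]
  intro s t h
  simp only [Rat.smul_def] at h
  have h' : (s : ℝ) + t * lam = 0 := by
    have : a * ((s : ℝ) + t * lam) = 0 := by linarith
    simpa [ha] using this
  by_cases ht : t = 0
  · subst ht
    simpa using h'
  · exfalso
    apply hirr
    refine ⟨-s / t, ?_⟩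
    have : (t : ℝ) ≠ 0 := by exact_mod_cast ht
    push_cast
    field_simp
    linarith

/-- If a vector is outside the span of a linearly independent pair, the values of a functional on
the three vectors can be prescribed. -/
lemma exists_functional_or {x y : ℝ} (hxy : LinearIndependent ℚ ![x, y]) (z : ℝ) :
    (∃ p q : ℚ, z = p * x + q * y) ∨
      ∀ r s t : ℝ, ∃ f : ℝ →ₗ[ℚ] ℝ, f x = r ∧ f y = s ∧ f z = t := by
  by_cases hz : z ∈ Submodule.span ℚ (range ![x, y])
  · left
    simp only [Matrix.range_cons, Matrix.range_empty, union_empty] at hz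
    rw [singleton_union, Submodule.mem_span_pair] at hz
    obtain ⟨p, q, h⟩ := hz
    exact ⟨p, q, by simp [← h, Rat.smul_def]⟩
  · right
    intro r s t
    have h3 := linearIndependent_finCons.2 ⟨hxy, hz⟩
    obtain ⟨f, hf⟩ := exists_functional h3 ![t, r, s]
    exact ⟨f, by simpa using hf 1, by simpa using hf 2, by simpa using hf 0⟩

/-- The number-theoretic half of the theorem. Here `W` is the family of sides of the tiles and
`(a, b)`, `(-λb, λa)` generate the period lattice in coordinates parallel to the tiles; `h` is the
equality of invariants. Only the symmetry of its left side in `f, g` and the nonnegativity for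
`f = g` are used. -/
lemma arithmetic_core {lam a b : ℝ} (hirr : Irrational lam) (ha : 0 < a) (I : Type*) [Fintype I]
    (W : I → ℝ)
    (h : ∀ f g : ℝ →ₗ[ℚ] ℝ,
      ∑ i, f (W i) * g (W i) = f a * g (lam * a) + f (lam * b) * g b) :
    ∃ p q r : ℚ, q ≤ p ∧ r ≤ q ∧ 0 ≤ r ∧
      (lam = (p : ℝ) + Real.sqrt ((q : ℝ) ^ 2 - (r : ℝ) ^ 2) ∨
       lam = (p : ℝ) - Real.sqrt ((q : ℝ) ^ 2 - (r : ℝ) ^ 2)) := by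
  have hli := linInd_pair hirr ha.ne'
  have hsymm : ∀ f g : ℝ →ₗ[ℚ] ℝ, f a * g (lam * a) + f (lam * b) * g b =
      g a * f (lam * a) + g (lam * b) * f b := by
    intro f g
    rw [← h f g, ← h g f]
    exact Finset.sum_congr rfl fun i _ => mul_comm _ _
  have hpsd : ∀ f : ℝ →ₗ[ℚ] ℝ, 0 ≤ f a * f (lam * a) + f (lam * b) * f b := by
    intro f
    rw [← h f f]
    exact Finset.sum_nonneg fun i _ => mul_self_nonneg _
  have hex : ∀ r s : ℝ, ∃ f : ℝ →ₗ[ℚ] ℝ, f a = r ∧ f (lam * a) = s := by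
    intro r s
    obtain ⟨f, hf⟩ := exists_functional hli ![r, s]
    exact ⟨f, by simpa using hf 0, by simpa using hf 1⟩
  have hlin : ∀ (f : ℝ →ₗ[ℚ] ℝ) (p q : ℚ) (x y : ℝ), f (p * x + q * y) = p * f x + q * f y := by
    intro f p q x y
    rw [← Rat.smul_def, ← Rat.smul_def, map_add, map_smul, map_smul, Rat.smul_def, Rat.smul_def]
  obtain ⟨α, β, hb⟩ : ∃ p q : ℚ, b = p * a + q * (lam * a) := by
    refine (exists_functional_or hli b).resolve_right fun hall => ?_
    obtain ⟨f, f1, f2, f3⟩ := hall 1 0 0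
    obtain ⟨g, g1, g2, g3⟩ := hall 0 1 0
    have := hsymm f g
    simp [f1, f2, f3, g1, g2, g3] at this
  obtain ⟨γ, δ, hlb⟩ : ∃ p q : ℚ, lam * b = p * a + q * (lam * a) := by
    refine (exists_functional_or hli (lam * b)).resolve_right fun hall => ?_
    obtain ⟨f, f1, f2, f3⟩ := hall 1 0 0
    obtain ⟨g, g1, g2, g3⟩ := hall 0 1 0
    have := hsymm f g
    simp [f1, f2, f3, g1, g2, g3] at this
  have hdet : (α : ℝ) * δ = 1 + β * γ := by
    obtain ⟨f, f1, f2⟩ := hex 1 0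
    obtain ⟨g, g1, g2⟩ := hex 0 1
    have := hsymm f g
    rw [hlb, hb] at this
    simp only [hlin, f1, f2, g1, g2] at this
    linarith
  have hform : ∀ x y : ℝ, 0 ≤ x * y + (γ * x + δ * y) * (α * x + β * y) := by
    intro x y
    obtain ⟨f, f1, f2⟩ := hex x y
    have := hpsd f
    rw [hlb, hb] at this
    simpa only [hlin, f1, f2] using this
  have hquad : (β : ℝ) * lam ^ 2 + (α - δ) * lam - γ = 0 := by
    have h1 : a * ((β : ℝ) * lam ^ 2 + (α - δ) * lam - γ) = 0 := by
      have := hlb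
      rw [hb] at this
      linarith
    simpa [ha.ne'] using h1
  have hαγ : (0 : ℝ) ≤ γ * α := by simpa using hform 1 0
  have hβδ : (0 : ℝ) ≤ δ * β := by simpa using hform 0 1
  -- nonpositive discriminant of the form, which reads `(2αδ)² ≤ 4αδ(αδ - 1)`
  have hαδ : (α : ℝ) * δ ≤ 0 := by
    have hd := discrim_le_zero (a := (γ * α : ℝ)) (b := 2 * (α * δ)) (c := δ * β) (by
      intro x
      have h1 := hform x 1
      have h2 : (γ * α : ℝ) * (x * x) + 2 * (α * δ) * x + δ * β =
          x * 1 + (γ * x + δ * 1) * (α * x + β * 1) := by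
        linear_combination x * hdet
      rwa [h2])
    unfold discrim at hd
    have : (β : ℝ) * γ = α * δ - 1 := by linarith
    have h2 : (2 * (α * δ : ℝ)) ^ 2 - 4 * (γ * α) * (δ * β) = 4 * (α * δ) := by
      linear_combination (-4) * (α * δ : ℝ) * this
    linarith
  have hβγ : (β : ℝ) * γ < 0 := by linarith
  have hβ : (β : ℝ) ≠ 0 := by
    intro h0
    simp [h0] at hβγ
  have hβQ : β ≠ 0 := by exact_mod_cast hβ
  have hγ : (γ : ℝ) ≠ 0 := by
    intro h0
    simp [h0] at hβγ
  have hαβ : (α : ℝ) * β ≤ 0 := by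
    have h1 : (α * β : ℝ) * γ ^ 2 ≤ 0 := by nlinarith
    have h2 : (0 : ℝ) < γ ^ 2 := by positivity
    exact nonpos_of_mul_nonpos_left h1 h2
  have hβ2 : (0 : ℝ) < β ^ 2 := by positivity
  have hp : (0 : ℚ) ≤ (δ - α) / (2 * β) := by
    have h1 : (δ - α) / (2 * β) = (δ * β - α * β) / (2 * β ^ 2) := by field_simp
    rw [h1]
    have : 0 ≤ δ * β - α * β := by
      have h2 : (0 : ℝ) ≤ δ * β - α * β := by linarith
      exact_mod_cast h2
    positivity
  have hroot : (lam - (δ - α) / (2 * β)) ^ 2 = ((δ + α) / (2 * β) : ℝ) ^ 2 - (1 / β : ℝ) ^ 2 := by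
    field_simp
    linear_combination 4 * (β : ℝ) * hquad - 4 * hdet
  refine ⟨(δ - α) / (2 * β), |(δ + α) / (2 * β)|, |1 / β|, ?_, ?_, abs_nonneg _, ?_⟩
  · rw [← abs_of_nonneg hp, ← sq_le_sq, div_pow, div_pow]
    have h1 : α * δ ≤ 0 := by exact_mod_cast hαδ
    gcongr ?_ / _
    nlinarith
  · rw [← sq_le_sq]
    have h1 : (1 / β : ℝ) ^ 2 ≤ ((δ + α) / (2 * β) : ℝ) ^ 2 := by
      linarith [sq_nonneg (lam - (δ - α) / (2 * β) : ℝ)]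
    exact_mod_cast h1
  · push_cast
    rw [sq_abs, sq_abs, ← hroot, Real.sqrt_sq_eq_abs]
    rcases abs_choice (lam - (δ - α) / (2 * β) : ℝ) with h1 | h1
    · left
      rw [h1]
      ring
    · right
      rw [h1]
      ring

/-! ### A fundamental domain made of two rectangles -/

/-- A fundamental domain of the lattice spanned by `(a, b)` and `(-e, d)`, cut by a vertical line
into two rectangles: it is the region over `[0, a)` between two consecutive translates of the
staircase `y = b⌊x / a⌋`, the upper one being moved by `(-e, d)`. -/
lemma staircase_isPartition {a b d e : ℝ} (ha : 0 < a) (hb : 0 ≤ b) (hd : 0 < d) (he : 0 ≤ e) :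
    IsPartition (fun z : ℤ × ℤ => z.1 * a - z.2 * e) (fun z : ℤ × ℤ => z.1 * b + z.2 * d)
      (fun j : Bool => if j then a - (e - ⌊e / a⌋ * a) else 0)
      (fun j : Bool => if j then a else a - (e - ⌊e / a⌋ * a))
      (fun _ => 0)
      (fun j : Bool => if j then d + (⌊e / a⌋ + 1) * b else d + ⌊e / a⌋ * b) := by
  intro x y
  set k := ⌊e / a⌋ with hk
  have hk1 : (k : ℝ) * a ≤ e := by
    have := Int.floor_le (e / a)
    rwa [← hk, le_div_iff₀ ha] at this
  have hk2 : e < (k + 1 : ℝ) * a := by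
    have := Int.lt_floor_add_one (e / a)
    rwa [← hk, div_lt_iff₀ ha] at this
  -- over `x`, the `n`-th translate of the staircase has height `B n`, its step having index `M n`
  let M : ℤ → ℤ := fun n => ⌊(x + n * e) / a⌋
  have hM : ∀ n m : ℤ, M n = m ↔ 0 ≤ x - (m * a - n * e) ∧ x - (m * a - n * e) < a := by
    intro n m
    simp only [M]
    rw [Int.floor_eq_iff, le_div_iff₀ ha, div_lt_iff₀ ha]
    constructor <;> rintro ⟨h1, h2⟩ <;> constructor <;> linarith
  have hMmono : Monotone M := by
    intro m n hmn
    have : (m : ℝ) ≤ n := by exact_mod_cast hmn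
    simp only [M]
    gcongr
  let B : ℤ → ℝ := fun n => n * d + M n * b
  have hB : ∀ m n, m ≤ n → B m + (n - m) * d ≤ B n := by
    intro m n hmn
    have h1 : (M m : ℝ) ≤ M n := by exact_mod_cast hMmono hmn
    have h2 := mul_le_mul_of_nonneg_right h1 hb
    simp only [B]
    linarith
  obtain ⟨n, hn1, hn2⟩ : ∃ n : ℤ, B n ≤ y ∧ ∀ n', B n' ≤ y → n' ≤ n := by
    refine Int.exists_greatest_of_bdd ⟨max 0 ⌈(y - B 0) / d⌉, ?_⟩ ?_
    · intro n hn
      by_contra hcon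
      push Not at hcon
      obtain ⟨h0, h1⟩ := max_lt_iff.1 hcon
      have h2 := hB 0 n h0.le
      have h3 : (y - B 0) / d < n := (Int.le_ceil _).trans_lt (by exact_mod_cast h1)
      rw [div_lt_iff₀ hd] at h3
      push_cast at h2
      linarith
    · refine ⟨min 0 ⌊(y - B 0) / d⌋, ?_⟩
      have h2 := hB _ 0 (min_le_left 0 ⌊(y - B 0) / d⌋)
      have h3 : ((min 0 ⌊(y - B 0) / d⌋ : ℤ) : ℝ) ≤ (y - B 0) / d :=
        le_trans (by exact_mod_cast min_le_right _ _) (Int.floor_le _)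
      rw [le_div_iff₀ hd] at h3
      rw [Int.cast_zero] at h2
      linarith
  have hn3 : y < B (n + 1) := by
    by_contra hcon
    have := hn2 (n + 1) (not_lt.1 hcon)
    omega
  have hstep : ∀ n m : ℤ, M n = m → ∀ j : Bool,
      (if j then a - (e - k * a) else 0) ≤ x - (m * a - n * e) →
      x - (m * a - n * e) < (if j then a else a - (e - k * a)) →
      M (n + 1) = m + k + (if j then 1 else 0) := by
    intro n m hm j h1 h2
    rw [hM] at hm ⊢
    cases j <;> simp at h1 h2 ⊢ <;> constructor <;> linarith
  have hiff : ∀ (j : Bool) (m n : ℤ),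
      (((if j then a - (e - k * a) else 0) ≤ x - (m * a - n * e) ∧
        x - (m * a - n * e) < (if j then a else a - (e - k * a))) ∧
      (0 ≤ y - (m * b + n * d) ∧
        y - (m * b + n * d) < (if j then d + (k + 1) * b else d + k * b))) ↔
      ((M n = m ∧ B n ≤ y ∧ y < B (n + 1)) ∧
        j = decide (a - (e - k * a) ≤ x - (m * a - n * e))) := by
    intro j m n
    constructor
    · rintro ⟨⟨h1, h2⟩, h3, h4⟩
      have hm : M n = m := by
        rw [hM]
        cases j <;> simp at h1 h2 <;> constructor <;> linarith
      have hs := hstep n m hm j h1 h2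
      refine ⟨⟨hm, ?_, ?_⟩, ?_⟩
      · simp only [B, hm]; linarith
      · simp only [B, hs]
        cases j <;> simp at h4 ⊢ <;> linarith
      · cases j <;> simp at h1 h2 ⊢ <;> linarith
    · rintro ⟨⟨hm, h3, h4⟩, hj⟩
      have hm' := (hM n m).1 hm
      have h12 : (if j then a - (e - k * a) else 0) ≤ x - (m * a - n * e) ∧
          x - (m * a - n * e) < (if j then a else a - (e - k * a)) := by
        cases j
        · simp at hj ⊢
          constructor <;> linarith
        · simp at hj ⊢
          constructor <;> linarith
      have hs := hstep n m hm j h12.1 h12.2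
      refine ⟨h12, ?_, ?_⟩
      · simp only [B, hm] at h3; linarith
      · simp only [B, hs] at h4
        cases j <;> simp at h4 ⊢ <;> linarith
  refine ⟨(decide (a - (e - k * a) ≤ x - ((M n : ℤ) * a - n * e)), (M n, n)), ?_, ?_⟩
  · exact (hiff _ _ _).2 ⟨⟨rfl, hn1, hn3⟩, rfl⟩
  · rintro ⟨j, m', n'⟩ h
    obtain ⟨⟨hm, h1, h2⟩, hj⟩ := (hiff j m' n').1 h
    have hnn : n' = n := by
      refine le_antisymm (hn2 n' h1) ?_
      by_contra hcon
      have h5 : n' + 1 ≤ n := by omega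
      have h6 := hB (n' + 1) n h5
      have h7 : ((n' + 1 : ℤ) : ℝ) ≤ n := by exact_mod_cast h5
      have h8 := mul_nonneg (sub_nonneg.2 h7) hd.le
      linarith
    subst hnn
    subst hm
    rw [hj]

/-- The invariant of the two rectangles of `staircase_isPartition`. -/
lemma staircase_sum {a b d e : ℝ} (ha : 0 < a) (hb : 0 ≤ b) (hd : 0 < d) (he : 0 ≤ e)
    (f g : ℝ →ₗ[ℚ] ℝ) :
    ∑ j : Bool, incr f (if j then a - (e - ⌊e / a⌋ * a) else 0)
        (if j then a else a - (e - ⌊e / a⌋ * a)) *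
      incr g 0 (if j then d + (⌊e / a⌋ + 1) * b else d + ⌊e / a⌋ * b) =
    f a * g d + f e * g b := by
  have hk0 : 0 ≤ ⌊e / a⌋ := Int.floor_nonneg.2 (by positivity)
  have hk1 : (⌊e / a⌋ : ℝ) * a ≤ e := by
    have := Int.floor_le (e / a)
    rwa [le_div_iff₀ ha] at this
  have hk2 : e < (⌊e / a⌋ + 1 : ℝ) * a := by
    have := Int.lt_floor_add_one (e / a)
    rwa [div_lt_iff₀ ha] at this
  generalize ⌊e / a⌋ = k at *
  have hk0' : (0 : ℝ) ≤ k := by exact_mod_cast hk0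
  have hz : ∀ (h : ℝ →ₗ[ℚ] ℝ) (t : ℝ), h (k * t) = k * h t := by
    intro h t
    rw [← zsmul_eq_mul, map_zsmul, zsmul_eq_mul]
  have hkb : 0 ≤ (k : ℝ) * b := by positivity
  simp only [Fintype.sum_bool, if_true, Bool.false_eq_true, if_false]
  rw [incr_of_le _ (by linarith), incr_of_le _ (by linarith), incr_of_le _ (by linarith),
    incr_of_le _ (by linarith)]
  simp only [map_sub, map_add, map_zero, add_mul, one_mul, hz]
  ring

/-! ### Squares in a rotated frame -/

/-- The first coordinate of `P` in the orthonormal frame `(c, s), (-s, c)`. -/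
def fstCoord (c s : ℝ) (P : ℝ × ℝ) : ℝ := c * P.1 + s * P.2

/-- The second coordinate of `P` in the orthonormal frame `(c, s), (-s, c)`. -/
def sndCoord (c s : ℝ) (P : ℝ × ℝ) : ℝ := c * P.2 - s * P.1

/-- The closed square with sides of length `w` along `(c, s), (-s, c)` and lower left corner
`(x, y)` in that frame. -/
def frameSq (c s x y w : ℝ) : Set (ℝ × ℝ) :=
  {P | (x ≤ fstCoord c s P ∧ fstCoord c s P ≤ x + w) ∧
    (y ≤ sndCoord c s P ∧ sndCoord c s P ≤ y + w)}

/-- The open square inside `frameSq c s x y w`. -/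
def frameSqO (c s x y w : ℝ) : Set (ℝ × ℝ) :=
  {P | (x < fstCoord c s P ∧ fstCoord c s P < x + w) ∧
    (y < sndCoord c s P ∧ sndCoord c s P < y + w)}

/-- The unit vector `(c, s)` lies in the half-open fourth quadrant. Each class of unit vectors
modulo quarter turns has exactly one such member. -/
def IsFrame (c s : ℝ) : Prop := c ^ 2 + s ^ 2 = 1 ∧ 0 < c ∧ s ≤ 0

lemma continuous_fstCoord (c s : ℝ) : Continuous (fstCoord c s) := by
  unfold fstCoord; fun_prop

lemma continuous_sndCoord (c s : ℝ) : Continuous (sndCoord c s) := by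
  unfold sndCoord; fun_prop

lemma fstCoord_sub (c s : ℝ) (P Q : ℝ × ℝ) :
    fstCoord c s (P - Q) = fstCoord c s P - fstCoord c s Q := by
  simp only [fstCoord, Prod.fst_sub, Prod.snd_sub]; ring

lemma sndCoord_sub (c s : ℝ) (P Q : ℝ × ℝ) :
    sndCoord c s (P - Q) = sndCoord c s P - sndCoord c s Q := by
  simp only [sndCoord, Prod.fst_sub, Prod.snd_sub]; ring

/-- The point with given coordinates in the frame. -/
def ofCoord (c s x y : ℝ) : ℝ × ℝ := (c * x - s * y, s * x + c * y)

lemma fstCoord_ofCoord {c s : ℝ} (h : c ^ 2 + s ^ 2 = 1) (x y : ℝ) :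
    fstCoord c s (ofCoord c s x y) = x := by
  simp only [fstCoord, ofCoord]; linear_combination x * h

lemma sndCoord_ofCoord {c s : ℝ} (h : c ^ 2 + s ^ 2 = 1) (x y : ℝ) :
    sndCoord c s (ofCoord c s x y) = y := by
  simp only [sndCoord, ofCoord]; linear_combination y * h

lemma ofCoord_coord {c s : ℝ} (h : c ^ 2 + s ^ 2 = 1) (P : ℝ × ℝ) :
    ofCoord c s (fstCoord c s P) (sndCoord c s P) = P := by
  ext
  · simp only [fstCoord, sndCoord, ofCoord]; linear_combination P.1 * h
  · simp only [fstCoord, sndCoord, ofCoord]; linear_combination P.2 * h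

lemma isOpen_frameSqO (c s x y w : ℝ) : IsOpen (frameSqO c s x y w) := by
  have h1 := continuous_fstCoord c s
  have h2 := continuous_sndCoord c s
  exact ((isOpen_lt continuous_const h1).inter (isOpen_lt h1 continuous_const)).inter
    ((isOpen_lt continuous_const h2).inter (isOpen_lt h2 continuous_const))

lemma frameSqO_subset (c s x y w : ℝ) : frameSqO c s x y w ⊆ frameSq c s x y w :=
  fun _ h => ⟨⟨h.1.1.le, h.1.2.le⟩, ⟨h.2.1.le, h.2.2.le⟩⟩

lemma frameSqO_subset_interior (c s x y w : ℝ) :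
    frameSqO c s x y w ⊆ interior (frameSq c s x y w) :=
  interior_maximal (frameSqO_subset c s x y w) (isOpen_frameSqO c s x y w)

lemma isCompact_frameSq {c s : ℝ} (h : c ^ 2 + s ^ 2 = 1) (x y w : ℝ) :
    IsCompact (frameSq c s x y w) := by
  have : frameSq c s x y w =
      (fun p : ℝ × ℝ => ofCoord c s p.1 p.2) '' (Icc x (x + w) ×ˢ Icc y (y + w)) := by
    ext P
    constructor
    · rintro ⟨h1, h2⟩
      exact ⟨(fstCoord c s P, sndCoord c s P), ⟨h1, h2⟩, ofCoord_coord h P⟩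
    · rintro ⟨⟨u, v⟩, ⟨h1, h2⟩, rfl⟩
      simp only [frameSq, mem_ofPred_eq, fstCoord_ofCoord h, sndCoord_ofCoord h]
      exact ⟨h1, h2⟩
  rw [this]
  refine (isCompact_Icc.prod isCompact_Icc).image ?_
  unfold ofCoord
  fun_prop

lemma sub_mem_frameSq {c s x y w : ℝ} {P v : ℝ × ℝ} :
    P - v ∈ frameSq c s x y w ↔ P ∈ frameSq c s (x + fstCoord c s v) (y + sndCoord c s v) w := by
  simp only [frameSq, mem_ofPred_eq, fstCoord_sub, sndCoord_sub]
  grind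

lemma sub_mem_frameSqO {c s x y w : ℝ} {P v : ℝ × ℝ} :
    P - v ∈ frameSqO c s x y w ↔
      P ∈ frameSqO c s (x + fstCoord c s v) (y + sndCoord c s v) w := by
  simp only [frameSqO, mem_ofPred_eq, fstCoord_sub, sndCoord_sub]
  grind

/-- A quarter turn of the frame describes the same squares. -/
lemma frameSq_rot (c s x y w : ℝ) : frameSq c s x y w = frameSq (-s) c y (-x - w) w := by
  ext P
  simp only [frameSq, fstCoord, sndCoord, mem_ofPred_eq]
  constructor
  · rintro ⟨⟨h1, h2⟩, h3, h4⟩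
    refine ⟨⟨?_, ?_⟩, ?_, ?_⟩ <;> linarith
  · rintro ⟨⟨h1, h2⟩, h3, h4⟩
    refine ⟨⟨?_, ?_⟩, ?_, ?_⟩ <;> linarith

lemma exists_isFrame (c s x y w : ℝ) (h : c ^ 2 + s ^ 2 = 1) :
    ∃ c' s' x' y' : ℝ, IsFrame c' s' ∧ frameSq c s x y w = frameSq c' s' x' y' w := by
  by_cases h1 : 0 < c ∧ s ≤ 0
  · exact ⟨c, s, x, y, ⟨h, h1⟩, rfl⟩
  by_cases h2 : 0 < -s ∧ c ≤ 0
  · exact ⟨-s, c, _, _, ⟨by linarith, h2⟩, frameSq_rot _ _ _ _ _⟩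
  by_cases h3 : 0 < -c ∧ -s ≤ 0
  · exact ⟨-c, -s, _, _, ⟨by linarith, h3⟩, by rw [frameSq_rot, frameSq_rot]⟩
  by_cases h4 : 0 < s ∧ -c ≤ 0
  · refine ⟨s, -c, -y - w, -(-x - w) - w, ⟨by linarith, h4⟩, ?_⟩
    rw [frameSq_rot, frameSq_rot, frameSq_rot, neg_neg]
  · exfalso
    have hs : s = 0 := by grind
    have hc : c = 0 := by grind
    simp [hs, hc] at h

lemma IsSquarePlane.exists_frame {S : Set (ℝ × ℝ)} (hS : IsSquarePlane S) :
    ∃ F : ℝ × ℝ, ∃ x y w : ℝ, IsFrame F.1 F.2 ∧ 0 < w ∧ S = frameSq F.1 F.2 x y w := by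
  obtain ⟨w, hw, p, θ, rfl⟩ := hS
  have h : Real.cos θ ^ 2 + Real.sin θ ^ 2 = 1 := Real.cos_sq_add_sin_sq θ
  obtain ⟨c', s', x', y', hF, he⟩ := exists_isFrame (Real.cos θ) (Real.sin θ)
    (fstCoord (Real.cos θ) (Real.sin θ) p) (sndCoord (Real.cos θ) (Real.sin θ) p) w h
  refine ⟨(c', s'), x', y', w, hF, hw, ?_⟩
  rw [← he]
  generalize Real.cos θ = c at *
  generalize Real.sin θ = s at *
  have himg : (fun q : ℝ × ℝ => (p.1 + q.1 * c - q.2 * s, p.2 + q.1 * s + q.2 * c)) =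
      fun q : ℝ × ℝ => p + ofCoord c s q.1 q.2 := by
    funext q
    ext <;> simp [ofCoord] <;> ring
  rw [himg]
  ext P
  have hP : P ∈ frameSq c s (fstCoord c s p) (sndCoord c s p) w ↔
      P - p ∈ frameSq c s 0 0 w := by
    rw [sub_mem_frameSq, zero_add, zero_add]
  rw [hP]
  constructor
  · rintro ⟨⟨u, v⟩, ⟨h1, h2⟩, rfl⟩
    simp only [frameSq, mem_ofPred_eq, add_sub_cancel_left, fstCoord_ofCoord h, sndCoord_ofCoord h,
      zero_add]
    exact ⟨h1, h2⟩
  · rintro ⟨h1, h2⟩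
    rw [zero_add] at h1 h2
    refine ⟨(fstCoord c s (P - p), sndCoord c s (P - p)), ⟨h1, h2⟩, ?_⟩
    simp only [ofCoord_coord h, add_sub_cancel]

/-- A neighbourhood of a point of a closed square meets the open square. -/
lemma frameSq_touch {c s x y w : ℝ} (h : c ^ 2 + s ^ 2 = 1) (hw : 0 < w) {P : ℝ × ℝ}
    (hP : P ∈ frameSq c s x y w) {O : Set (ℝ × ℝ)} (hO : IsOpen O) (hPO : P ∈ O) :
    (O ∩ frameSqO c s x y w).Nonempty := by
  let γ : ℝ → ℝ × ℝ := fun t => ofCoord c s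
    (fstCoord c s P + t * (x + w / 2 - fstCoord c s P))
    (sndCoord c s P + t * (y + w / 2 - sndCoord c s P))
  have hγ : Continuous γ := by
    simp only [γ, ofCoord]; fun_prop
  have h0 : γ 0 ∈ O := by simpa [γ, ofCoord_coord h] using hPO
  have hev : ∀ᶠ t in nhdsWithin (0 : ℝ) (Ioi 0), γ t ∈ O :=
    mem_nhdsWithin_of_mem_nhds (hγ.continuousAt.preimage_mem_nhds (hO.mem_nhds h0))
  have h1 : ∀ᶠ t in nhdsWithin (0 : ℝ) (Ioi 0), t ∈ Ioo (0 : ℝ) 1 :=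
    Ioo_mem_nhdsGT one_pos
  obtain ⟨t, ht, ht0, ht1⟩ := (hev.and h1).exists
  refine ⟨γ t, ht, ?_⟩
  simp only [γ, frameSqO, mem_ofPred_eq, fstCoord_ofCoord h, sndCoord_ofCoord h]
  obtain ⟨⟨a1, a2⟩, a3, a4⟩ := hP
  refine ⟨⟨?_, ?_⟩, ?_, ?_⟩ <;> nlinarith

/-- The midpoint of two points of a square is inside the square unless the points lie on a common
line parallel to a side. -/
lemma midpoint_mem_frameSqO {c s x y w : ℝ} {P Q : ℝ × ℝ} (hP : P ∈ frameSq c s x y w)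
    (hQ : Q ∈ frameSq c s x y w) (h1 : fstCoord c s P ≠ fstCoord c s Q)
    (h2 : sndCoord c s P ≠ sndCoord c s Q) :
    ((P.1 + Q.1) / 2, (P.2 + Q.2) / 2) ∈ frameSqO c s x y w := by
  have e1 : fstCoord c s ((P.1 + Q.1) / 2, (P.2 + Q.2) / 2) =
      (fstCoord c s P + fstCoord c s Q) / 2 := by simp only [fstCoord]; ring
  have e2 : sndCoord c s ((P.1 + Q.1) / 2, (P.2 + Q.2) / 2) =
      (sndCoord c s P + sndCoord c s Q) / 2 := by simp only [sndCoord]; ring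
  simp only [frameSqO, mem_ofPred_eq, e1, e2]
  simp only [frameSq, mem_ofPred_eq] at hP hQ
  rcases lt_or_gt_of_ne h1 with h1 | h1 <;> rcases lt_or_gt_of_ne h2 with h2 | h2 <;>
    refine ⟨⟨?_, ?_⟩, ?_, ?_⟩ <;> linarith

lemma midpoint_mem_frameSq {c s x y w : ℝ} {P Q : ℝ × ℝ} (hP : P ∈ frameSq c s x y w)
    (hQ : Q ∈ frameSq c s x y w) :
    ((P.1 + Q.1) / 2, (P.2 + Q.2) / 2) ∈ frameSq c s x y w := by
  have e1 : fstCoord c s ((P.1 + Q.1) / 2, (P.2 + Q.2) / 2) =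
      (fstCoord c s P + fstCoord c s Q) / 2 := by simp only [fstCoord]; ring
  have e2 : sndCoord c s ((P.1 + Q.1) / 2, (P.2 + Q.2) / 2) =
      (sndCoord c s P + sndCoord c s Q) / 2 := by simp only [sndCoord]; ring
  simp only [frameSq, mem_ofPred_eq, e1, e2]
  simp only [frameSq, mem_ofPred_eq] at hP hQ
  refine ⟨⟨?_, ?_⟩, ?_, ?_⟩ <;> linarith

lemma IsFrame.eq_of_det {c s c' s' : ℝ} (h : IsFrame c s) (h' : IsFrame c' s')
    (hdet : c * s' - s * c' = 0) : c = c' ∧ s = s' := by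
  obtain ⟨h1, h2, h3⟩ := h
  obtain ⟨h1', h2', h3'⟩ := h'
  have hc : c ^ 2 = c' ^ 2 := by
    linear_combination (c * s' + s * c') * hdet - c ^ 2 * h1' + c' ^ 2 * h1
  have hcc : c = c' := by
    rwa [sq_eq_sq₀ h2.le h2'.le] at hc
  subst hcc
  refine ⟨rfl, ?_⟩
  have : c * (s' - s) = 0 := by linarith
  rcases mul_eq_zero.1 this with h | h <;> linarith

/-- Two non-parallel squares with disjoint interiors share at most one point. -/
lemma frameSq_inter_subsingleton {c s x y w c' s' x' y' w' : ℝ} (h : IsFrame c s)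
    (h' : IsFrame c' s') (hne : ¬ (c = c' ∧ s = s')) (hw : 0 < w) (hw' : 0 < w')
    (hdisj : ∀ P, P ∈ frameSqO c s x y w → P ∉ frameSqO c' s' x' y' w') :
    (frameSq c s x y w ∩ frameSq c' s' x' y' w').Subsingleton := by
  rintro P ⟨hP, hP'⟩ Q ⟨hQ, hQ'⟩
  by_contra hPQ
  have hdet : c * s' - s * c' ≠ 0 := fun h0 => hne (h.eq_of_det h' h0)
  have hdot : c * c' + s * s' ≠ 0 := by
    have h1 := mul_pos h.2.1 h'.2.1
    have h2 := mul_nonneg_of_nonpos_of_nonpos h.2.2 h'.2.2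
    positivity
  by_cases hS : fstCoord c s P ≠ fstCoord c s Q ∧ sndCoord c s P ≠ sndCoord c s Q
  · obtain ⟨R, hR, hR'⟩ := frameSq_touch h'.1 hw' (midpoint_mem_frameSq hP' hQ')
      (isOpen_frameSqO c s x y w) (midpoint_mem_frameSqO hP hQ hS.1 hS.2)
    exact hdisj R hR hR'
  by_cases hT : fstCoord c' s' P ≠ fstCoord c' s' Q ∧ sndCoord c' s' P ≠ sndCoord c' s' Q
  · obtain ⟨R, hR, hRin⟩ := frameSq_touch h.1 hw (midpoint_mem_frameSq hP hQ)
      (isOpen_frameSqO c' s' x' y' w') (midpoint_mem_frameSqO hP' hQ' hT.1 hT.2)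
    exact hdisj R hRin hR
  -- `P - Q` is parallel to a side of each square
  apply hPQ
  have key : ∀ A B C D : ℝ, A * D - B * C ≠ 0 → A * P.1 + B * P.2 = A * Q.1 + B * Q.2 →
      C * P.1 + D * P.2 = C * Q.1 + D * Q.2 → P = Q := by
    intro A B C D hd h1 h2
    ext
    · have : (A * D - B * C) * (P.1 - Q.1) = 0 := by linear_combination D * h1 - B * h2
      have := (mul_eq_zero.1 this).resolve_left hd
      linarith
    · have : (A * D - B * C) * (P.2 - Q.2) = 0 := by linear_combination A * h2 - C * h1
      have := (mul_eq_zero.1 this).resolve_left hd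
      linarith
  simp only [fstCoord, sndCoord, not_and_or, not_not] at hS hT
  rcases hS with hS | hS <;> rcases hT with hT | hT
  · exact key c s c' s' hdet hS hT
  · exact key c s (-s') c' (by convert hdot using 1; ring) hS (by linarith)
  · exact key (-s) c c' s' (by intro h0; apply hdot; linarith) (by linarith) hT
  · exact key (-s) c (-s') c' (by intro h0; apply hdet; linarith) (by linarith) (by linarith)

/-! ### Geometry of the tiling -/

lemma isClosed_latticeL (lam : ℝ) (hpos : 0 < lam) : IsClosed (latticeL lam) := by
  have h1 : latticeL lam =
      (fun v : ℝ × ℝ => (v.1, v.2 / lam)) ⁻¹'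
        (range ((↑) : ℤ → ℝ) ×ˢ range ((↑) : ℤ → ℝ)) := by
    ext ⟨u, v⟩
    simp only [latticeL, mem_ofPred_eq, mem_preimage, mem_prod, mem_range, Prod.mk.injEq]
    constructor
    · rintro ⟨m, n, rfl, rfl⟩
      exact ⟨⟨m, rfl⟩, n, by field_simp⟩
    · rintro ⟨⟨m, rfl⟩, n, hn⟩
      exact ⟨m, n, rfl, by rw [hn]; field_simp⟩
  rw [h1]
  have h2 := Int.isClosedEmbedding_coe_real.isClosed_range
  exact (h2.prod h2).preimage (by fun_prop)

lemma countable_latticeL (lam : ℝ) : (latticeL lam).Countable := by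
  refine (countable_range fun z : ℤ × ℤ => ((z.1 : ℝ), (z.2 : ℝ) * lam)).mono ?_
  rintro v ⟨m, n, rfl⟩
  exact ⟨(m, n), rfl⟩

lemma sub_mem_latticeL {lam : ℝ} {u v : ℝ × ℝ} (hu : u ∈ latticeL lam) (hv : v ∈ latticeL lam) :
    u - v ∈ latticeL lam := by
  obtain ⟨m, n, rfl⟩ := hu
  obtain ⟨m', n', rfl⟩ := hv
  refine ⟨m - m', n - n', ?_⟩
  ext
  · simp
  · simp [sub_mul]

/-- The interiors of distinct translates of tiles are disjoint. -/
lemma IsPeriodicSquareTiling.eq_of_interior {lam : ℝ} {Γ : Set (Set (ℝ × ℝ))}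
    (hΓ : IsPeriodicSquareTiling lam Γ) {S T : Set (ℝ × ℝ)} (hS : S ∈ Γ) (hT : T ∈ Γ)
    {P u v : ℝ × ℝ} (hu : u ∈ latticeL lam) (hv : v ∈ latticeL lam)
    (h1 : P - u ∈ interior S) (h2 : P - v ∈ interior T) : S = T ∧ u = v := by
  obtain ⟨-, -, hdisj, -, hinj⟩ := hΓ
  have h1' := interior_mono (subset_sUnion_of_mem hS) h1
  have h2' := interior_mono (subset_sUnion_of_mem hT) h2
  have huv : u = v := by
    by_contra hne
    refine hinj _ h1' _ h2' (fun h => hne (sub_right_injective h)) ?_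
    have := sub_mem_latticeL hv hu
    rwa [sub_sub_sub_cancel_left]
  refine ⟨?_, huv⟩
  subst huv
  by_contra hne
  have : P - u ∈ interior S ∩ interior T := ⟨h1, h2⟩
  rw [hdisj S hS T hT hne] at this
  exact this

open scoped Pointwise in
/-- All tiles are parallel. Otherwise the plane is the union of two closed periodic sets, the
tiles with a given direction and the other ones, which meet in a countable set only; but the
complement of a countable set in the plane is connected. -/
lemma IsPeriodicSquareTiling.exists_common_frame {lam : ℝ} (hpos : 0 < lam)
    {Γ : Set (Set (ℝ × ℝ))} (hΓ : IsPeriodicSquareTiling lam Γ) :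
    ∃ c s : ℝ, IsFrame c s ∧ ∀ S ∈ Γ, ∃ x y w : ℝ, 0 < w ∧ S = frameSq c s x y w := by
  have hex : ∀ S ∈ Γ, ∃ F : ℝ × ℝ, ∃ x y w : ℝ, IsFrame F.1 F.2 ∧ 0 < w ∧
      S = frameSq F.1 F.2 x y w := fun S hS => (hΓ.2.1 S hS).exists_frame
  choose! fr X Y W hfr hW hsq using hex
  obtain ⟨S₀, hS₀, -⟩ : ∃ S ∈ Γ, True := by
    obtain ⟨q, ⟨S, hS, -⟩, -⟩ := hΓ.2.2.2.1 0
    exact ⟨S, hS, trivial⟩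
  suffices hall : ∀ T ∈ Γ, fr T = fr S₀ by
    refine ⟨(fr S₀).1, (fr S₀).2, hfr S₀ hS₀, fun S hS => ⟨X S, Y S, W S, hW S hS, ?_⟩⟩
    rw [← hall S hS]
    exact hsq S hS
  intro T₀ hT₀
  by_contra hne
  let A : Set (ℝ × ℝ) := ⋃ S ∈ {S ∈ Γ | fr S = fr S₀}, (S + latticeL lam)
  let B : Set (ℝ × ℝ) := ⋃ S ∈ {S ∈ Γ | fr S ≠ fr S₀}, (S + latticeL lam)
  have hclosed : ∀ S ∈ Γ, IsClosed (S + latticeL lam) := by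
    intro S hS
    refine (isClosed_latticeL lam hpos).add_left_of_isCompact ?_
    rw [hsq S hS]
    exact isCompact_frameSq (hfr S hS).1 _ _ _
  have hA : IsClosed A :=
    (hΓ.1.subset (sep_subset _ _)).isClosed_biUnion fun S hS => hclosed S hS.1
  have hB : IsClosed B :=
    (hΓ.1.subset (sep_subset _ _)).isClosed_biUnion fun S hS => hclosed S hS.1
  have hAB : A ∪ B = univ := by
    rw [eq_univ_iff_forall]
    intro P
    obtain ⟨q, ⟨S, hS, hq⟩, hPq⟩ := hΓ.2.2.2.1 P
    have hP : P ∈ S + latticeL lam := ⟨q, hq, P - q, hPq, by simp⟩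
    by_cases hF : fr S = fr S₀
    · exact Or.inl (mem_biUnion (show S ∈ {S ∈ Γ | fr S = fr S₀} from ⟨hS, hF⟩) hP)
    · exact Or.inr (mem_biUnion (show S ∈ {S ∈ Γ | fr S ≠ fr S₀} from ⟨hS, hF⟩) hP)
  have hcount : (A ∩ B).Countable := by
    have hsub : A ∩ B ⊆ ⋃ S ∈ {S ∈ Γ | fr S = fr S₀}, ⋃ T ∈ {T ∈ Γ | fr T ≠ fr S₀},
        ⋃ u ∈ latticeL lam, ⋃ v ∈ latticeL lam, {P | P - u ∈ S ∧ P - v ∈ T} := by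
      rintro P ⟨hPA, hPB⟩
      simp only [A, B, mem_iUnion, exists_prop] at hPA hPB ⊢
      obtain ⟨S, hS, p, hp, u, hu, rfl⟩ := hPA
      obtain ⟨T, hT, q, hq, v, hv, hqv⟩ := hPB
      simp only at hqv
      refine ⟨S, hS, T, hT, u, hu, v, hv, ?_, ?_⟩
      · simpa using hp
      · simpa [← hqv] using hq
    refine Countable.mono hsub ?_
    refine (hΓ.1.subset (sep_subset _ _)).countable.biUnion fun S hS => ?_
    refine (hΓ.1.subset (sep_subset _ _)).countable.biUnion fun T hT => ?_
    refine (countable_latticeL lam).biUnion fun u hu => ?_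
    refine (countable_latticeL lam).biUnion fun v hv => ?_
    refine Subsingleton.countable ?_
    have hsub := frameSq_inter_subsingleton
      (x := X S + fstCoord (fr S).1 (fr S).2 u) (y := Y S + sndCoord (fr S).1 (fr S).2 u)
      (x' := X T + fstCoord (fr T).1 (fr T).2 v) (y' := Y T + sndCoord (fr T).1 (fr T).2 v)
      (hfr S hS.1) (hfr T hT.1)
      (fun h => hT.2 ((Prod.ext h.1 h.2).symm.trans hS.2)) (hW S hS.1) (hW T hT.1) (by
        intro P h1 h2
        rw [← sub_mem_frameSqO] at h1 h2
        have h1' := frameSqO_subset_interior _ _ _ _ _ h1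
        have h2' := frameSqO_subset_interior _ _ _ _ _ h2
        rw [← hsq S hS.1] at h1'
        rw [← hsq T hT.1] at h2'
        have hST := (hΓ.eq_of_interior hS.1 hT.1 hu hv h1' h2').1
        exact hT.2 (hST ▸ hS.2))
    refine hsub.anti ?_
    rintro P ⟨h1, h2⟩
    rw [hsq S hS.1] at h1
    rw [hsq T hT.1] at h2
    exact ⟨sub_mem_frameSq.1 h1, sub_mem_frameSq.1 h2⟩
  have hconn : IsPreconnected (A ∩ B)ᶜ := by
    refine (hcount.isPathConnected_compl_of_one_lt_rank ?_).isConnected.isPreconnected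
    simp [← Module.finrank_eq_rank]
  have hdense : Dense (A ∩ B)ᶜ := hcount.dense_compl ℝ
  have hmeet : ∀ S ∈ Γ, ((A ∩ B)ᶜ ∩ S).Nonempty := by
    intro S hS
    have hcen : ofCoord (fr S).1 (fr S).2 (X S + W S / 2) (Y S + W S / 2) ∈
        frameSqO (fr S).1 (fr S).2 (X S) (Y S) (W S) := by
      have hw := hW S hS
      simp only [frameSqO, mem_ofPred_eq, fstCoord_ofCoord (hfr S hS).1,
        sndCoord_ofCoord (hfr S hS).1]
      refine ⟨⟨?_, ?_⟩, ?_, ?_⟩ <;> linarith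
    obtain ⟨P, hP1, hP2⟩ := hdense.inter_open_nonempty _ (isOpen_frameSqO _ _ _ _ _) ⟨_, hcen⟩
    refine ⟨P, hP2, ?_⟩
    rw [hsq S hS]
    exact frameSqO_subset _ _ _ _ _ hP1
  have hzero : (0 : ℝ × ℝ) ∈ latticeL lam := ⟨0, 0, by ext <;> simp⟩
  have hsubL : ∀ S : Set (ℝ × ℝ), S ⊆ S + latticeL lam :=
    fun S P hP => ⟨P, hP, 0, hzero, by simp⟩
  obtain ⟨P, hP, hPAB⟩ := isPreconnected_closed_iff.1 hconn A B hA hB (by simp [hAB])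
    ((hmeet S₀ hS₀).mono (inter_subset_inter_right _ fun P hP =>
      mem_biUnion (show S₀ ∈ {S ∈ Γ | fr S = fr S₀} from ⟨hS₀, rfl⟩) (hsubL _ hP)))
    ((hmeet T₀ hT₀).mono (inter_subset_inter_right _ fun P hP =>
      mem_biUnion (show T₀ ∈ {S ∈ Γ | fr S ≠ fr S₀} from ⟨hT₀, hne⟩) (hsubL _ hP)))
  exact hP hPAB

/-- Only finitely many lattice vectors have bounded coordinates in a rotated frame. -/
lemma finite_lattice_coord {lam a b : ℝ} (hpos : 0 < lam) (hab : a ^ 2 + b ^ 2 = 1) (N : ℝ) :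
    {z : ℤ × ℤ | |(z.1 * a - z.2 * (lam * b) : ℝ)| ≤ N ∧
      |(z.1 * b + z.2 * (lam * a) : ℝ)| ≤ N}.Finite := by
  have ha : |a| ≤ 1 := abs_le_one_iff_mul_self_le_one.2 (by nlinarith [sq_nonneg b])
  have hb : |b| ≤ 1 := abs_le_one_iff_mul_self_le_one.2 (by nlinarith [sq_nonneg a])
  refine Set.Finite.subset (((Set.finite_Icc (-⌈2 * N⌉) ⌈2 * N⌉).prod
    (Set.finite_Icc (-⌈2 * N / lam⌉) ⌈2 * N / lam⌉))) ?_
  rintro ⟨m, n⟩ ⟨h1, h2⟩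
  simp only at h1 h2
  have hm : |(m : ℝ)| ≤ 2 * N := by
    have e : (m : ℝ) = a * (m * a - n * (lam * b)) + b * (m * b + n * (lam * a)) := by
      linear_combination (-(m : ℝ)) * hab
    rw [e]
    refine (abs_add_le _ _).trans ?_
    rw [abs_mul, abs_mul]
    have i1 := mul_le_mul ha h1 (abs_nonneg _) zero_le_one
    have i2 := mul_le_mul hb h2 (abs_nonneg _) zero_le_one
    linarith
  have hn : |(n : ℝ)| ≤ 2 * N / lam := by
    have hl : |(n : ℝ)| * lam = |(n * lam : ℝ)| := by rw [abs_mul, abs_of_pos hpos]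
    rw [le_div_iff₀ hpos, hl]
    have e : (n * lam : ℝ) = a * (m * b + n * (lam * a)) - b * (m * a - n * (lam * b)) := by
      linear_combination (-(n * lam : ℝ)) * hab
    rw [e]
    refine (abs_sub _ _).trans ?_
    rw [abs_mul, abs_mul]
    have i1 := mul_le_mul ha h2 (abs_nonneg _) zero_le_one
    have i2 := mul_le_mul hb h1 (abs_nonneg _) zero_le_one
    linarith
  rw [abs_le] at hm hn
  have c1 := Int.le_ceil (2 * N)
  have c2 := Int.le_ceil (2 * N / lam)
  refine ⟨⟨?_, ?_⟩, ?_, ?_⟩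
  · have : ((-⌈2 * N⌉ : ℤ) : ℝ) ≤ m := by push_cast; linarith
    exact_mod_cast this
  · have : (m : ℝ) ≤ (⌈2 * N⌉ : ℤ) := by linarith
    exact_mod_cast this
  · have : ((-⌈2 * N / lam⌉ : ℤ) : ℝ) ≤ n := by push_cast; linarith
    exact_mod_cast this
  · have : (n : ℝ) ≤ (⌈2 * N / lam⌉ : ℤ) := by linarith
    exact_mod_cast this

/-- In the common frame, the half-open tiles and their translates partition the plane: a point
belongs to the half-open tile that contains its small displacements along the diagonal. -/
lemma IsPeriodicSquareTiling.isPartition {lam : ℝ} (hpos : 0 < lam)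
    {Γ : Set (Set (ℝ × ℝ))} (hΓ : IsPeriodicSquareTiling lam Γ) {c s : ℝ} (hF : IsFrame c s)
    (X Y W : Γ → ℝ) (hsq : ∀ i : Γ, (i : Set (ℝ × ℝ)) = frameSq c s (X i) (Y i) (W i)) :
    IsPartition (fun z : ℤ × ℤ => z.1 * c - z.2 * (lam * (-s)))
      (fun z : ℤ × ℤ => z.1 * (-s) + z.2 * (lam * c))
      X (fun i => X i + W i) Y (fun i => Y i + W i) := by
  have hΓfin : Finite Γ := hΓ.1
  set t₁ : ℤ × ℤ → ℝ := fun z => z.1 * c - z.2 * (lam * (-s)) with ht₁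
  set t₂ : ℤ × ℤ → ℝ := fun z => z.1 * (-s) + z.2 * (lam * c) with ht₂
  let ℓ : ℤ × ℤ → ℝ × ℝ := fun z => ((z.1 : ℝ), (z.2 : ℝ) * lam)
  have hℓ : ∀ z, ℓ z ∈ latticeL lam := fun z => ⟨z.1, z.2, rfl⟩
  have hℓ1 : ∀ z, fstCoord c s (ℓ z) = t₁ z := by
    intro z; simp only [fstCoord, ℓ, ht₁]; ring
  have hℓ2 : ∀ z, sndCoord c s (ℓ z) = t₂ z := by
    intro z; simp only [sndCoord, ℓ, ht₂]; ring
  intro x y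
  let γ : ℝ → ℝ × ℝ := fun ε => ofCoord c s (x + ε) (y + ε)
  have hγ1 : ∀ ε z, fstCoord c s (γ ε - ℓ z) = x + ε - t₁ z := by
    intro ε z; rw [fstCoord_sub, fstCoord_ofCoord hF.1, hℓ1]
  have hγ2 : ∀ ε z, sndCoord c s (γ ε - ℓ z) = y + ε - t₂ z := by
    intro ε z; rw [sndCoord_sub, sndCoord_ofCoord hF.1, hℓ2]
  have hpos' : ∀ᶠ ε in nhdsWithin (0 : ℝ) (Ioi 0), 0 < ε := eventually_mem_nhdsWithin
  have hsmall : ∀ δ : ℝ, 0 < δ → ∀ᶠ ε in nhdsWithin (0 : ℝ) (Ioi 0), ε < δ := by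
    intro δ hδ
    filter_upwards [Ioo_mem_nhdsGT hδ] with ε hε using hε.2
  have hin : ∀ p : Γ × (ℤ × ℤ), ((X p.1 ≤ x - t₁ p.2 ∧ x - t₁ p.2 < X p.1 + W p.1) ∧
      (Y p.1 ≤ y - t₂ p.2 ∧ y - t₂ p.2 < Y p.1 + W p.1)) →
      ∀ᶠ ε in nhdsWithin (0 : ℝ) (Ioi 0), γ ε - ℓ p.2 ∈ interior (p.1 : Set (ℝ × ℝ)) := by
    rintro ⟨i, z⟩ ⟨⟨h1, h2⟩, h3, h4⟩
    simp only at h1 h2 h3 h4 ⊢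
    filter_upwards [hpos', hsmall _ (sub_pos.2 h2), hsmall _ (sub_pos.2 h4)] with ε e1 e2 e3
    rw [hsq i]
    apply frameSqO_subset_interior
    simp only [frameSqO, mem_ofPred_eq, hγ1, hγ2]
    refine ⟨⟨?_, ?_⟩, ?_, ?_⟩ <;> linarith
  have hout : ∀ p : Γ × (ℤ × ℤ), ¬ ((X p.1 ≤ x - t₁ p.2 ∧ x - t₁ p.2 < X p.1 + W p.1) ∧
      (Y p.1 ≤ y - t₂ p.2 ∧ y - t₂ p.2 < Y p.1 + W p.1)) →
      ∀ᶠ ε in nhdsWithin (0 : ℝ) (Ioi 0), γ ε - ℓ p.2 ∉ (p.1 : Set (ℝ × ℝ)) := by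
    rintro ⟨i, z⟩ hnot
    simp only at hnot ⊢
    have hmem : ∀ ε, γ ε - ℓ z ∈ (i : Set (ℝ × ℝ)) →
        (X i ≤ x + ε - t₁ z ∧ x + ε - t₁ z ≤ X i + W i) ∧
        (Y i ≤ y + ε - t₂ z ∧ y + ε - t₂ z ≤ Y i + W i) := by
      intro ε h
      rw [hsq i] at h
      simpa only [frameSq, mem_ofPred_eq, hγ1, hγ2] using h
    have hsm : ∀ u v : ℝ, ∀ᶠ ε in nhdsWithin (0 : ℝ) (Ioi 0), v < u → ε < u - v := by
      intro u v
      by_cases huv : v < u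
      · filter_upwards [hsmall _ (sub_pos.2 huv)] with ε hε _ using hε
      · exact Filter.Eventually.of_forall fun ε h => absurd h huv
    filter_upwards [hpos', hsm (X i) (x - t₁ z), hsm (Y i) (y - t₂ z)] with ε e1 e2 e3 hcon
    have hm := hmem ε hcon
    apply hnot
    refine ⟨⟨?_, by linarith⟩, ?_, by linarith⟩
    · by_contra hlt
      have := e2 (not_le.1 hlt)
      linarith
    · by_contra hlt
      have := e3 (not_le.1 hlt)
      linarith
  have hexists : ∃ p : Γ × (ℤ × ℤ), (X p.1 ≤ x - t₁ p.2 ∧ x - t₁ p.2 < X p.1 + W p.1) ∧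
      (Y p.1 ≤ y - t₂ p.2 ∧ y - t₂ p.2 < Y p.1 + W p.1) := by
    by_contra hnone
    push Not at hnone
    -- only finitely many translates come close to the point
    have hfin : {p : Γ × (ℤ × ℤ) | ∃ ε, 0 < ε ∧ ε < 1 ∧
        γ ε - ℓ p.2 ∈ (p.1 : Set (ℝ × ℝ))}.Finite := by
      have hi : ∀ i : Γ, {z : ℤ × ℤ | ∃ ε, 0 < ε ∧ ε < 1 ∧
          γ ε - ℓ z ∈ (i : Set (ℝ × ℝ))}.Finite := by
        intro i
        refine (finite_lattice_coord (a := c) (b := -s) hpos (by linarith [hF.1])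
          (|x| + |y| + |X i| + |Y i| + |W i| + 1)).subset ?_
        rintro z ⟨ε, e1, e2, h⟩
        rw [hsq i] at h
        simp only [frameSq, mem_ofPred_eq, hγ1, hγ2] at h
        have a1 := abs_le.1 (le_refl |x|)
        have a2 := abs_le.1 (le_refl |y|)
        have a3 := abs_le.1 (le_refl |X i|)
        have a4 := abs_le.1 (le_refl |Y i|)
        have a5 := abs_le.1 (le_refl |W i|)
        change |t₁ z| ≤ _ ∧ |t₂ z| ≤ _
        constructor <;> rw [abs_le] <;> constructor <;> linarith
      refine (Set.finite_iUnion fun i : Γ => (hi i).image fun z => (i, z)).subset ?_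
      rintro ⟨i, z⟩ h
      exact mem_iUnion.2 ⟨i, z, h, rfl⟩
    have hev := (Filter.eventually_all_finite hfin).2 fun p _ => hout p (fun h => by
      have := hnone p h.1 h.2.1
      linarith [h.2.2])
    obtain ⟨ε, h1, h2, h3⟩ := (hev.and (hpos'.and (hsmall 1 one_pos))).exists
    obtain ⟨q, ⟨S, hS, hq⟩, m, n, hmn⟩ := hΓ.2.2.2.1 (γ ε)
    have hmem : γ ε - ℓ (m, n) ∈ S := by
      have : γ ε - ℓ (m, n) = q := by
        change γ ε - ((m : ℝ), (n : ℝ) * lam) = q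
        rw [← hmn]
        abel
      rwa [this]
    exact h1 (⟨S, hS⟩, (m, n)) ⟨ε, h2, h3, hmem⟩ hmem
  obtain ⟨p, hp⟩ := hexists
  refine ⟨p, hp, ?_⟩
  intro p' hp'
  obtain ⟨ε, h1, h2⟩ := ((hin p hp).and (hin p' hp')).exists
  obtain ⟨h3, h4⟩ := hΓ.eq_of_interior p.1.2 p'.1.2 (hℓ p.2) (hℓ p'.2) h1 h2
  have h5 : p.2 = p'.2 := by
    simp only [ℓ, Prod.mk.injEq] at h4
    refine Prod.ext (by exact_mod_cast h4.1) ?_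
    exact_mod_cast mul_right_cancel₀ hpos.ne' h4.2
  exact (Prod.ext (Subtype.ext h3) h5).symm

/-- If there exists a periodic tiling of the plane by squares with periods `(1,0)` and
`(0,λ)`, where `λ > 0` is irrational, then `λ = p ± √(q² − r²)` for some rationals
`p ≥ q ≥ r ≥ 0`. -/
theorem periodic_square_tiling_lambda (lam : ℝ) (hirr : Irrational lam) (hpos : 0 < lam)
    (Γ : Set (Set (ℝ × ℝ))) (hΓ : IsPeriodicSquareTiling lam Γ) :
    ∃ p q r : ℚ, q ≤ p ∧ r ≤ q ∧ 0 ≤ r ∧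
      (lam = (p : ℝ) + Real.sqrt ((q : ℝ) ^ 2 - (r : ℝ) ^ 2) ∨
       lam = (p : ℝ) - Real.sqrt ((q : ℝ) ^ 2 - (r : ℝ) ^ 2)) := by
  obtain ⟨c, s, hF, hsq⟩ := hΓ.exists_common_frame hpos
  choose X Y W hW hsq using fun i : Γ => hsq i i.2
  have : Fintype Γ := hΓ.1.fintype
  have hs : 0 ≤ -s := by linarith [hF.2.2]
  have hP := hΓ.isPartition hpos hF X Y W hsq
  have hQ := staircase_isPartition hF.2.1 hs (mul_pos hpos hF.2.1) (mul_nonneg hpos.le hs)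
  refine arithmetic_core (b := -s) hirr hF.2.1 Γ W fun f g => ?_
  have h1 := hP.sum_eq (fun z => by push_cast [Prod.fst_neg, Prod.snd_neg]; ring)
    (fun z => by push_cast [Prod.fst_neg, Prod.snd_neg]; ring)
    (fun N => finite_lattice_coord hpos (by linarith [hF.1]) N) hQ f g
  rw [staircase_sum hF.2.1 hs (mul_pos hpos hF.2.1) (mul_nonneg hpos.le hs)] at h1
  rw [← h1]
  refine Finset.sum_congr rfl fun i _ => ?_
  rw [incr_of_le _ (by linarith [hW i]), incr_of_le _ (by linarith [hW i]), map_add, map_add,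
    add_sub_cancel_left, add_sub_cancel_left]
end

section
/- If the rectangle 1 × λ, where λ > 0 is irrational, admits a covering by squares on both sides in one layer (i.e., there exists a finite set of squares as in the definition below), then there exist rational numbers p ≥ q ≥ r ≥ 0 such that λ = p + √(q² − r²) or λ = p − √(q² − r²). -/
/-!
The squares of `Γ` together with their images under `p ↦ -p` tile the torus `ℝ² / 2L`
(`IsBothSidesSquareCovering.exists_tiling`).

All these squares are parallel (`IsLatticeTiling.parallel`): those parallel to a given one and the
remaining ones would otherwise form two closed sets covering the plane whose intersection is
countable, whereas the complement of a countable set in the plane is connected. Let `(c, s)` be the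
common direction, chosen with `c > 0` and `s ≥ 0`.

For every additive `f : ℝ → ℝ` there is a finitely additive, translation-invariant area on half-open
rectangles with sides parallel to `(c, s)` and `(-s, c)`, in which a `w × h` rectangle has area
`f w * f h` (`exists_content`). By cutting and pasting, two fundamental domains of `2L` made of such
rectangles have the same area (`cut_paste`). The tiling is one such domain, of area `∑ f (sᵢ)²` for
the side lengths `sᵢ`; the union of a `2c × 2λc` and a `2λs × 2s` rectangle is another one
(`Lshape_partition`). Hence `f c * f (λc) + f s * f (λs) ≥ 0` for every additive `f`
(`IsLatticeTiling.nonneg`).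

Suitable choices of `f` show that `λ` is a quadratic irrationality with positive conjugate
(`algebra_part`). So `λ = p ± √D` with `p`, `D` rational and `0 ≤ D ≤ p²`, and the identity
`D = ((p + D / p) / 2)² - ((p - D / p) / 2)²` gives `q` and `r`.
-/

open Set

/-- The doubled lattice `2L = {(2m, 2nλ) : m, n ∈ ℤ}` of the lattice `L` generated by
the rectangle `1 × λ`. -/
def twoLatticeL (lam : ℝ) : Set (ℝ × ℝ) :=
  {v | ∃ m n : ℤ, v = (2 * (m : ℝ), 2 * (n : ℝ) * lam)}

/-- Two points `P`, `Q` of the plane are complexly equivalent if `Q` is obtained from `P`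
by a composition of point reflections through points of `L`; equivalently `Q − P ∈ 2L`
or `Q + P ∈ 2L`. -/
def ComplexEquiv (lam : ℝ) (P Q : ℝ × ℝ) : Prop :=
  Q - P ∈ twoLatticeL lam ∨ Q + P ∈ twoLatticeL lam

/-- A covering of the rectangle `1 × λ` by squares on both sides in one layer:
a finite set `Γ` of squares with pairwise disjoint interiors such that every point of the
plane is complexly equivalent to a point of the union of `Γ`, and no two distinct points
of the interior of the union of `Γ` are complexly equivalent. -/
def IsBothSidesSquareCovering (lam : ℝ) (Γ : Set (Set (ℝ × ℝ))) : Prop :=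
  Γ.Finite ∧ (∀ S ∈ Γ, IsSquarePlane S) ∧
  (∀ S ∈ Γ, ∀ T ∈ Γ, S ≠ T → interior S ∩ interior T = ∅) ∧
  (∀ p : ℝ × ℝ, ∃ q ∈ ⋃₀ Γ, ComplexEquiv lam p q) ∧
  (∀ p ∈ interior (⋃₀ Γ), ∀ q ∈ interior (⋃₀ Γ), p ≠ q → ¬ ComplexEquiv lam p q)

/-! ### A finitely additive, translation-invariant area -/

theorem exists_linearMap_of_li {K V W ι : Type*} [Field K] [AddCommGroup V] [Module K V]
    [AddCommGroup W] [Module K W] {v : ι → V} (hv : LinearIndependent K v) (w : ι → W) :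
    ∃ f : V →ₗ[K] W, ∀ i, f (v i) = w i := by
  obtain ⟨f, hf⟩ := LinearMap.exists_extend ((Module.Basis.span hv).constr K w)
  refine ⟨f, fun i => ?_⟩
  have h := congrArg (fun g => g (Module.Basis.span hv i)) hf
  simp only [LinearMap.comp_apply, Module.Basis.constr_basis] at h
  rw [← h]
  congr 1
  simp [Module.Basis.span_apply]

/-- In a vanishing combination, evaluation at a minimal point of the support isolates the
coefficient of that point. -/
theorem linearIndependent_indicator_Ici {P : Type*} [PartialOrder P] :
    LinearIndependent ℝ (fun p : P => (Ici p).indicator (1 : P → ℝ)) := by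
  classical
  rw [linearIndependent_iff]
  intro l hl
  by_contra hne
  obtain ⟨p, hp⟩ := l.support.exists_minimal (Finsupp.support_nonempty_iff.mpr hne)
  have h := congrFun hl p
  rw [Finsupp.linearCombination_apply, Finsupp.sum, Finset.sum_apply,
    Finset.sum_eq_single p] at h
  · simp at h
    exact (Finsupp.mem_support_iff.mp hp.1) h
  · intro q hq hqp
    have : ¬ q ≤ p := fun hle => hqp (le_antisymm hle (hp.2 hq hle))
    simp [this]
  · intro h; exact absurd hp.1 h

/-- The generalized area attached to an additive `f`: a linear functional on functions of the plane
that sends the indicator of a half-open rectangle to the product of the `f`-lengths of its sides.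
It is prescribed on indicators of quadrants, which are linearly independent. -/
theorem exists_content (f : ℝ →+ ℝ) : ∃ I : (ℝ × ℝ → ℝ) →ₗ[ℝ] ℝ, ∀ a b c d : ℝ, a ≤ b → c ≤ d →
    I ((Ico a b ×ˢ Ico c d).indicator 1) = (f b - f a) * (f d - f c) := by
  obtain ⟨I, hI⟩ := exists_linearMap_of_li (linearIndependent_indicator_Ici (P := ℝ × ℝ))
    (fun p => f p.1 * f p.2)
  refine ⟨I, fun a b c d hab hcd => ?_⟩
  have key : (Ico a b ×ˢ Ico c d).indicator (1 : ℝ × ℝ → ℝ) =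
      (Ici (a, c)).indicator 1 - (Ici (b, c)).indicator 1 - (Ici (a, d)).indicator 1
        + (Ici (b, d)).indicator 1 := by
    funext ⟨x, y⟩
    simp only [indicator_apply, Pi.add_apply, Pi.sub_apply, mem_prod, mem_Ico, mem_Ici,
      Prod.mk_le_mk, Pi.one_apply]
    by_cases h1 : a ≤ x <;> by_cases h2 : b ≤ x <;> by_cases h3 : c ≤ y <;> by_cases h4 : d ≤ y <;>
      simp [h1, h2, h3, h4, not_lt.mpr, not_le.mp] <;> grind
  rw [key]
  simp only [map_add, map_sub, hI]
  ring

/-- No inequality between the bounds is needed: both rectangles are empty if one is. -/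
theorem content_translate (f : ℝ →+ ℝ) (I : (ℝ × ℝ → ℝ) →ₗ[ℝ] ℝ)
    (hI : ∀ a b c d : ℝ, a ≤ b → c ≤ d →
      I ((Ico a b ×ˢ Ico c d).indicator 1) = (f b - f a) * (f d - f c))
    (a b c d s t : ℝ) :
    I ((Ico (a + s) (b + s) ×ˢ Ico (c + t) (d + t)).indicator 1) =
      I ((Ico a b ×ˢ Ico c d).indicator 1) := by
  by_cases h : a ≤ b ∧ c ≤ d
  · rw [hI _ _ _ _ h.1 h.2, hI _ _ _ _ (by linarith [h.1]) (by linarith [h.2])]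
    simp only [map_add]; ring
  · rw [not_and_or, not_le, not_le] at h
    have h1 : Ico a b ×ˢ Ico c d = ∅ := by
      rcases h with h | h <;> simp [Ico_eq_empty_of_le h.le]
    have h2 : Ico (a + s) (b + s) ×ˢ Ico (c + t) (d + t) = ∅ := by
      rcases h with h | h
      · simp [Ico_eq_empty_of_le (show b + s ≤ a + s by linarith)]
      · simp [Ico_eq_empty_of_le (show d + t ≤ c + t by linarith)]
    rw [h1, h2]

/-- The half-open rectangle `[a.1, b.1) × [a.2, b.2)`. -/
def hoRect (a b : ℝ × ℝ) : Set (ℝ × ℝ) := Ico a.1 b.1 ×ˢ Ico a.2 b.2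

/-- If two finite families of half-open rectangles both partition the plane together with their
translates by the same lattice, then they have the same total `f`-area: cut every rectangle of one
family along the translates of the other family and move the pieces. -/
theorem cut_paste (f : ℝ →+ ℝ) {ι κ : Type*} [Fintype ι] [Fintype κ]
    (a b : ι → ℝ × ℝ) (c d : κ → ℝ × ℝ) (w : ℤ × ℤ →+ ℝ × ℝ)
    (hab : ∀ i, a i ≤ b i) (hcd : ∀ k, c k ≤ d k)
    (h1 : ∀ p, ∃! x : ι × (ℤ × ℤ), p - w x.2 ∈ hoRect (a x.1) (b x.1))
    (h2 : ∀ p, ∃! x : κ × (ℤ × ℤ), p - w x.2 ∈ hoRect (c x.1) (d x.1))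
    (hfin : ∀ i k, {z | ∃ p, p ∈ hoRect (a i) (b i) ∧ p - w z ∈ hoRect (c k) (d k)}.Finite) :
    ∑ i, (f (b i).1 - f (a i).1) * (f (b i).2 - f (a i).2) =
      ∑ k, (f (d k).1 - f (c k).1) * (f (d k).2 - f (c k).2) := by
  classical
  obtain ⟨I, hI⟩ := exists_content f
  have hM : (⋃ i, ⋃ k, {z | ∃ p, p ∈ hoRect (a i) (b i) ∧ p - w z ∈ hoRect (c k) (d k)}).Finite :=
    finite_iUnion fun i => finite_iUnion fun k => hfin i k
  -- the finitely many translations that make rectangles of the two families overlap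
  set M : Finset (ℤ × ℤ) := hM.toFinset with hMdef
  have memM : ∀ i k z p, p ∈ hoRect (a i) (b i) → p - w z ∈ hoRect (c k) (d k) → z ∈ M := by
    intro i k z p hp hz
    simp only [hMdef, Finite.mem_toFinset, mem_iUnion]
    exact ⟨i, k, p, hp, hz⟩
  have e1 : ∀ i, (hoRect (a i) (b i)).indicator (1 : ℝ × ℝ → ℝ) =
      ∑ k, ∑ z ∈ M, (hoRect (a i) (b i) ∩ {p | p - w z ∈ hoRect (c k) (d k)}).indicator 1 := by
    intro i
    funext p
    simp only [Finset.sum_apply, indicator_apply, mem_inter_iff, mem_ofPred_eq, Pi.one_apply]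
    by_cases hp : p ∈ hoRect (a i) (b i)
    · obtain ⟨⟨k, z⟩, hkz, huniq⟩ := h2 p
      rw [if_pos hp, Finset.sum_eq_single k, Finset.sum_eq_single z]
      · rw [if_pos ⟨hp, hkz⟩]
      · intro z' _ hne
        rw [if_neg]
        rintro ⟨_, h⟩
        exact hne (congrArg Prod.snd (huniq (k, z') h))
      · intro h; exact absurd (memM i k z p hp hkz) h
      · intro k' _ hne
        refine Finset.sum_eq_zero fun z' _ => ?_
        rw [if_neg]
        rintro ⟨_, h⟩
        exact hne (congrArg Prod.fst (huniq (k', z') h))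
      · simp
    · simp [hp]
  have e2 : ∀ k, (hoRect (c k) (d k)).indicator (1 : ℝ × ℝ → ℝ) =
      ∑ i, ∑ z ∈ M, ({p | p + w z ∈ hoRect (a i) (b i)} ∩ hoRect (c k) (d k)).indicator 1 := by
    intro k
    funext p
    simp only [Finset.sum_apply, indicator_apply, mem_inter_iff, mem_ofPred_eq, Pi.one_apply]
    by_cases hp : p ∈ hoRect (c k) (d k)
    · obtain ⟨⟨i, z⟩, hiz, huniq⟩ := h1 p
      simp only at hiz
      have hiz' : p + w (-z) ∈ hoRect (a i) (b i) := by simpa [sub_eq_add_neg] using hiz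
      rw [if_pos hp, Finset.sum_eq_single i, Finset.sum_eq_single (-z)]
      · rw [if_pos ⟨hiz', hp⟩]
      · intro z' _ hne
        rw [if_neg]
        rintro ⟨h, _⟩
        refine hne ?_
        have := congrArg Prod.snd (huniq (i, -z') (by simpa [sub_eq_add_neg] using h))
        simp only at this
        rw [← this, neg_neg]
      · intro h
        exact absurd (memM i k (-z) (p + w (-z)) hiz' (by simpa using hp)) h
      · intro i' _ hne
        refine Finset.sum_eq_zero fun z' _ => ?_
        rw [if_neg]
        rintro ⟨h, _⟩
        exact hne (congrArg Prod.fst (huniq (i', -z') (by simpa [sub_eq_add_neg] using h)))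
      · simp
    · simp [hp]
  have tr : ∀ i k z, I ((hoRect (a i) (b i) ∩ {p | p - w z ∈ hoRect (c k) (d k)}).indicator 1) =
      I (({p | p + w z ∈ hoRect (a i) (b i)} ∩ hoRect (c k) (d k)).indicator 1) := by
    intro i k z
    have r1 : {p | p + w z ∈ hoRect (a i) (b i)} ∩ hoRect (c k) (d k) =
        Ico (max ((a i).1 - (w z).1) (c k).1) (min ((b i).1 - (w z).1) (d k).1) ×ˢ
        Ico (max ((a i).2 - (w z).2) (c k).2) (min ((b i).2 - (w z).2) (d k).2) := by
      ext ⟨x, y⟩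
      simp only [hoRect, mem_inter_iff, mem_ofPred_eq, mem_prod, mem_Ico, Prod.fst_add,
        Prod.snd_add, max_le_iff, lt_min_iff]
      constructor
      · rintro ⟨⟨⟨_, _⟩, _, _⟩, ⟨_, _⟩, _, _⟩; refine ⟨⟨⟨?_, ?_⟩, ?_, ?_⟩, ⟨?_, ?_⟩, ?_, ?_⟩ <;> linarith
      · rintro ⟨⟨⟨_, _⟩, _, _⟩, ⟨_, _⟩, _, _⟩; refine ⟨⟨⟨?_, ?_⟩, ?_, ?_⟩, ⟨?_, ?_⟩, ?_, ?_⟩ <;> linarith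
    have r2 : hoRect (a i) (b i) ∩ {p | p - w z ∈ hoRect (c k) (d k)} =
        Ico (max ((a i).1 - (w z).1) (c k).1 + (w z).1) (min ((b i).1 - (w z).1) (d k).1 + (w z).1) ×ˢ
        Ico (max ((a i).2 - (w z).2) (c k).2 + (w z).2)
          (min ((b i).2 - (w z).2) (d k).2 + (w z).2) := by
      ext ⟨x, y⟩
      simp only [hoRect, mem_inter_iff, mem_ofPred_eq, mem_prod, mem_Ico, Prod.fst_sub,
        Prod.snd_sub, max_le_iff, lt_min_iff, ← le_sub_iff_add_le, ← sub_lt_iff_lt_add]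
      constructor
      · rintro ⟨⟨⟨_, _⟩, _, _⟩, ⟨_, _⟩, _, _⟩; refine ⟨⟨⟨?_, ?_⟩, ?_, ?_⟩, ⟨?_, ?_⟩, ?_, ?_⟩ <;> linarith
      · rintro ⟨⟨⟨_, _⟩, _, _⟩, ⟨_, _⟩, _, _⟩; refine ⟨⟨⟨?_, ?_⟩, ?_, ?_⟩, ⟨?_, ?_⟩, ?_, ?_⟩ <;> linarith
    rw [r1, r2]
    exact content_translate f I hI _ _ _ _ _ _
  have v1 : ∀ i, I ((hoRect (a i) (b i)).indicator 1) =
      (f (b i).1 - f (a i).1) * (f (b i).2 - f (a i).2) :=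
    fun i => hI _ _ _ _ (hab i).1 (hab i).2
  have v2 : ∀ k, I ((hoRect (c k) (d k)).indicator 1) =
      (f (d k).1 - f (c k).1) * (f (d k).2 - f (c k).2) :=
    fun k => hI _ _ _ _ (hcd k).1 (hcd k).2
  simp only [← v1, ← v2]
  simp only [e1]
  rw [Finset.sum_congr rfl fun k _ => congrArg I (e2 k)]
  simp only [map_sum, tr]
  exact Finset.sum_comm

/-! ### An L-shaped fundamental domain of a lattice -/

/-- The combinatorial core of `Lshape_partition`. For nonincreasing `m` and nondecreasing `n` the
composite `k ↦ n (m k)` is nonincreasing, so it crosses the diagonal exactly once: either at a fixed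
point (first alternative, flag `true`) or by a jump (second alternative, flag `false`). -/
theorem exists_unique_Lshape (m n : ℤ → ℤ) (hm : Antitone m) (hn : Monotone n) :
    ∃! x : Bool × (ℤ × ℤ),
      if x.1 then m x.2.2 = x.2.1 ∧ n x.2.1 = x.2.2
      else (m (x.2.2 + 1) ≤ x.2.1 ∧ x.2.1 < m x.2.2) ∧ (n x.2.1 ≤ x.2.2 ∧ x.2.2 < n (x.2.1 + 1)) := by
  have hg : Antitone fun k => n (m k) := fun x y h => hn (hm h)
  -- the last `k` with `k ≤ n (m k)`
  obtain ⟨k, hk, hkmax⟩ : ∃ k, k ≤ n (m k) ∧ ∀ j, j ≤ n (m j) → j ≤ k := by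
    refine Int.exists_greatest_of_bdd ⟨max 0 (n (m 0)), fun j hj => ?_⟩ ⟨min 0 (n (m 0)), ?_⟩
    · rcases le_total j 0 with h | h
      · exact le_max_of_le_left h
      · exact le_max_of_le_right (hj.trans (hg h))
    · exact (min_le_right _ _).trans (hg (min_le_left _ _))
  have hk1 : n (m (k + 1)) < k + 1 := by
    by_contra h
    have := hkmax (k + 1) (not_lt.mp h)
    omega
  rcases hk.eq_or_lt with heq | hlt
  · refine ⟨(true, (m k, k)), by simp [← heq], ?_⟩
    rintro ⟨_ | _, i, j⟩ h
    · simp only [Bool.false_eq_true, if_false] at h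
      obtain ⟨⟨h1, h2⟩, h3, h4⟩ := h
      have a1 : n (m (j + 1)) ≤ j := (hn h1).trans h3
      have a2 : j < n (m j) := h4.trans_le (hn h2)
      have a3 := hkmax j a2.le
      rcases a3.eq_or_lt with h | h
      · subst h; omega
      · have := hg (show j + 1 ≤ k by omega)
        simp only at this
        omega
    · simp only [if_true] at h
      obtain ⟨h1, h2⟩ := h
      subst h1
      have a3 := hkmax j h2.ge
      rcases a3.eq_or_lt with h | h
      · subst h; rfl
      · have := hg h.le
        simp only at this
        omega
  · -- the last `i` before `n` jumps past `k`
    obtain ⟨i, hi, himax⟩ : ∃ i, n i ≤ k ∧ ∀ j, n j ≤ k → j ≤ i := by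
      refine Int.exists_greatest_of_bdd ⟨m k, fun j hj => ?_⟩ ⟨m (k + 1), by omega⟩
      by_contra h
      have := hn (not_le.mp h).le
      omega
    have hi1 : k < n (i + 1) := by
      by_contra h
      have := himax (i + 1) (not_lt.mp h)
      omega
    have hi2 : m (k + 1) ≤ i := himax _ (by omega)
    have hi3 : i < m k := by
      by_contra h
      have := hn (not_lt.mp h)
      omega
    refine ⟨(false, (i, k)), by simp [*], ?_⟩
    rintro ⟨_ | _, i', j⟩ h
    · simp only [Bool.false_eq_true, if_false] at h
      obtain ⟨⟨h1, h2⟩, h3, h4⟩ := h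
      have a1 : n (m (j + 1)) ≤ j := (hn h1).trans h3
      have a2 : j < n (m j) := h4.trans_le (hn h2)
      have a3 := hkmax j a2.le
      have : j = k := by
        rcases a3.eq_or_lt with h | h
        · exact h
        · have := hg (show j + 1 ≤ k by omega)
          simp only at this
          omega
      subst this
      have b1 := himax i' h3
      have : i' = i := by
        by_contra hne
        have := hn (show i' + 1 ≤ i by omega)
        omega
      rw [this]
    · simp only [if_true] at h
      obtain ⟨h1, h2⟩ := h
      subst h1
      have a3 := hkmax j h2.ge
      rcases a3.eq_or_lt with h | h
      · subst h; omega
      · have := hg h.le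
        simp only at this
        omega

/-- The rectangles `[0, u₁) × [0, v₂)` and `[u₁, u₁ + v₁) × [v₂ - u₂, v₂)` together form a
fundamental domain of the lattice generated by `(u₁, -u₂)` and `(v₁, v₂)`. The point `(x, y)` lies in
the translate with coefficients `(i, j)` according to the values of
`m j = ⌊(x - j * v₁) / u₁⌋` and `n i = ⌊(y + i * u₂) / v₂⌋`. -/
theorem Lshape_partition (u₁ u₂ v₁ v₂ : ℝ) (hu₁ : 0 < u₁) (hu₂ : 0 ≤ u₂) (hv₁ : 0 ≤ v₁)
    (hv₂ : 0 < v₂) (p : ℝ × ℝ) :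
    ∃! x : Bool × (ℤ × ℤ),
      p - ((x.2.1 : ℝ) * u₁ + x.2.2 * v₁, -(x.2.1 : ℝ) * u₂ + x.2.2 * v₂) ∈
        hoRect (if x.1 then (0, 0) else (u₁, v₂ - u₂)) (if x.1 then (u₁, v₂) else (u₁ + v₁, v₂)) := by
  obtain ⟨x, y⟩ := p
  have hm : Antitone fun k : ℤ => ⌊(x - k * v₁) / u₁⌋ := by
    intro i j h
    have : (i : ℝ) ≤ j := by exact_mod_cast h
    refine Int.floor_mono ?_
    gcongr
  have hn : Monotone fun k : ℤ => ⌊(y + k * u₂) / v₂⌋ := by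
    intro i j h
    have : (i : ℝ) ≤ j := by exact_mod_cast h
    refine Int.floor_mono ?_
    gcongr
  have key := exists_unique_Lshape _ _ hm hn
  refine (existsUnique_congr ?_).mp key
  rintro ⟨_ | _, i, j⟩
  · simp only [Bool.false_eq_true, if_false, hoRect, mem_prod, mem_Ico, Prod.mk_sub_mk,
      ← Int.lt_add_one_iff, Int.floor_lt, Int.lt_floor_iff, div_lt_iff₀ hu₁, div_lt_iff₀ hv₂,
      le_div_iff₀ hu₁, le_div_iff₀ hv₂]
    push_cast
    constructor
    · rintro ⟨⟨_, _⟩, _, _⟩; refine ⟨⟨?_, ?_⟩, ?_, ?_⟩ <;> linarith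
    · rintro ⟨⟨_, _⟩, _, _⟩; refine ⟨⟨?_, ?_⟩, ?_, ?_⟩ <;> linarith
  · simp only [if_true, hoRect, mem_prod, mem_Ico, Prod.mk_sub_mk, Int.floor_eq_iff,
      div_lt_iff₀ hu₁, div_lt_iff₀ hv₂, le_div_iff₀ hu₁, le_div_iff₀ hv₂]
    constructor
    · rintro ⟨⟨_, _⟩, _, _⟩; refine ⟨⟨?_, ?_⟩, ?_, ?_⟩ <;> linarith
    · rintro ⟨⟨_, _⟩, _, _⟩; refine ⟨⟨?_, ?_⟩, ?_, ?_⟩ <;> linarith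

/-! ### Algebra of the inequality -/

theorem li_pair (lam : ℝ) (hirr : Irrational lam) (c : ℝ) (hc : c ≠ 0) :
    LinearIndependent ℚ ![c, lam * c] := by
  rw [LinearIndependent.pair_iff]
  intro a b h
  simp only [Rat.smul_def] at h
  have hx : (a : ℝ) + b * lam = 0 := by
    have : c * (a + b * lam) = 0 := by linarith
    exact (mul_eq_zero.mp this).resolve_left hc
  have hb : b = 0 := by
    by_contra hb
    have hb' : (b : ℝ) ≠ 0 := by exact_mod_cast hb
    refine hirr ⟨-a / b, ?_⟩
    push_cast
    field_simp
    linarith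
  subst hb
  simpa using hx

/-- If `x` were independent of `c` and `λc` over `ℚ`, some `ℚ`-linear `f` would vanish at `x` and
take the values `1` and `-1` at `c` and `λc`. -/
theorem mem_span_of_nonneg (lam : ℝ) (hirr : Irrational lam) (c x : ℝ) (hc : c ≠ 0)
    (H : ∀ f : ℝ →ₗ[ℚ] ℝ, f x = 0 → 0 ≤ f c * f (lam * c)) :
    ∃ a b : ℚ, x = (a + b * lam) * c := by
  by_contra hx
  have hx' : x ∉ Submodule.span ℚ (range ![c, lam * c]) := by
    intro h
    rw [Matrix.range_cons, Matrix.range_cons, Matrix.range_empty, union_empty,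
      singleton_union, Submodule.mem_span_pair] at h
    obtain ⟨a, b, h⟩ := h
    refine hx ⟨a, b, ?_⟩
    simp only [Rat.smul_def] at h
    rw [← h]; ring
  have hli : LinearIndependent ℚ (Fin.cons x ![c, lam * c] : Fin 3 → ℝ) :=
    linearIndependent_finCons.mpr ⟨li_pair lam hirr c hc, hx'⟩
  obtain ⟨f, hf⟩ := exists_linearMap_of_li hli (![0, 1, -1] : Fin 3 → ℝ)
  have h0 := hf 0
  have h1 := hf 1
  have h2 := hf 2
  simp at h0 h1 h2
  have : f c = 1 := h1
  have h2' : f (lam * c) = -1 := h2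
  have := H f h0
  rw [h2', h1] at this
  norm_num at this

/-- The inequality forces `s` and `λs` into the `ℚ`-span of `c` and `λc`. Hence `s = t * c` with
`t = a + b * λ`, and `λ` is a root of a quadratic equation over `ℚ` unless `b = 0`. A rational `t` is
excluded by `f c = 1`, `f (λc) = -1`. For quadratic `λ` with conjugate `μ`, the choice `f c = 1`,
`f (λc) = μ` turns the inequality into `0 ≤ μ * (1 + t'^2)`, where `t'` is the conjugate of `t`; so
`λ` and `μ` are both positive. -/
theorem algebra_part (lam : ℝ) (hirr : Irrational lam) (hpos : 0 < lam) (c s : ℝ) (hc : c ≠ 0)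
    (H : ∀ f : ℝ →ₗ[ℚ] ℝ, 0 ≤ f c * f (lam * c) + f s * f (lam * s)) :
    ∃ p q r : ℚ, q ≤ p ∧ r ≤ q ∧ 0 ≤ r ∧
      (lam = (p : ℝ) + Real.sqrt ((q : ℝ) ^ 2 - (r : ℝ) ^ 2) ∨
       lam = (p : ℝ) - Real.sqrt ((q : ℝ) ^ 2 - (r : ℝ) ^ 2)) := by
  obtain ⟨a, b, hab⟩ := mem_span_of_nonneg lam hirr c s hc fun f hf => by
    simpa [hf] using H f
  obtain ⟨a', b', hab'⟩ := mem_span_of_nonneg lam hirr c (lam * s) hc fun f hf => by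
    simpa [hf] using H f
  have hval : ∀ (f : ℝ →ₗ[ℚ] ℝ) (x y : ℚ), f ((x + y * lam) * c) = x * f c + y * f (lam * c) := by
    intro f x y
    have : ((x : ℝ) + y * lam) * c = x • c + y • (lam * c) := by
      simp only [Rat.smul_def]; ring
    rw [this, map_add, map_smul, map_smul, Rat.smul_def, Rat.smul_def]
  have hquad : (b : ℝ) * lam ^ 2 + (a - b') * lam - a' = 0 := by
    have h : c * (b * lam ^ 2 + (a - b') * lam - a') = 0 := by
      rw [hab] at hab'; linear_combination hab'
    exact (mul_eq_zero.mp h).resolve_left hc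
  have hb : b ≠ 0 := by
    rintro rfl
    simp only [Rat.cast_zero, zero_mul, add_zero, zero_add] at hab hquad
    obtain ⟨f, hf⟩ := exists_linearMap_of_li (li_pair lam hirr c hc) (![1, -1] : Fin 2 → ℝ)
    have h0 : f c = 1 := hf 0
    have h1 : f (lam * c) = -1 := hf 1
    have e1 : s = ((a : ℚ) + (0 : ℚ) * lam) * c := by simp [hab]
    have e2 : lam * s = (((0 : ℚ) : ℝ) + (a : ℚ) * lam) * c := by rw [hab]; push_cast; ring
    have := H f
    rw [e2, e1, hval, hval, h0, h1] at this
    push_cast at this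
    nlinarith [sq_nonneg (a : ℝ)]
  have hbR : (b : ℝ) ≠ 0 := by exact_mod_cast hb
  -- `λ` has trace `e` and norm `-h`
  obtain ⟨e, he⟩ : ∃ e : ℚ, e = (b' - a) / b := ⟨_, rfl⟩
  obtain ⟨h, hh⟩ : ∃ h : ℚ, h = a' / b := ⟨_, rfl⟩
  have hlam : lam ^ 2 = e * lam + h := by
    rw [he, hh]; push_cast; field_simp; linarith
  set mu : ℝ := e - lam with hmu
  have hmu2 : lam * mu = -h := by rw [hmu]; linear_combination -hlam
  have hmupos : 0 < mu := by
    obtain ⟨f, hf⟩ := exists_linearMap_of_li (li_pair lam hirr c hc) (![1, mu] : Fin 2 → ℝ)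
    have h0 : f c = 1 := hf 0
    have h1 : f (lam * c) = mu := hf 1
    have := H f
    rw [hab', hab, hval, hval, h0, h1] at this
    have hq : (a' : ℝ) + b' * mu = (a + b * mu) * mu := by
      have e1 : (b' : ℝ) = a + b * e := by rw [he]; push_cast; field_simp; ring
      have e2 : (a' : ℝ) = b * h := by rw [hh]; push_cast; field_simp
      rw [e1, e2]
      linear_combination (b : ℝ) * hmu2 - b * mu * hmu
    have h3 : 0 ≤ mu * (1 + (a + b * mu) ^ 2) := by
      rw [mul_one, mul_one, hq] at this
      linarith
    have h4 : 0 ≤ mu := nonneg_of_mul_nonneg_left h3 (by positivity)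
    rcases h4.eq_or_lt with h5 | h5
    · exact absurd ⟨e, by linarith⟩ hirr
    · exact h5
  -- `λ = p ± √D`, and `D = q² - r²` for `q = (p + D / p) / 2`, `r = (p - D / p) / 2`
  obtain ⟨p, hp⟩ : ∃ p : ℚ, p = e / 2 := ⟨_, rfl⟩
  have hpR : (p : ℝ) = (lam + mu) / 2 := by rw [hp]; push_cast; rw [hmu]; ring
  have hp0 : 0 < p := by
    have : (0 : ℝ) < p := by rw [hpR]; positivity
    exact_mod_cast this
  obtain ⟨D, hD⟩ : ∃ D : ℚ, D = p ^ 2 + h := ⟨_, rfl⟩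
  have hDR : (D : ℝ) = ((lam - mu) / 2) ^ 2 := by
    rw [hD]; push_cast; rw [hpR]; linear_combination hmu2
  have hD0 : 0 ≤ D := by
    have : (0 : ℝ) ≤ D := by rw [hDR]; positivity
    exact_mod_cast this
  have hDp : D ≤ p ^ 2 := by
    have : (D : ℝ) ≤ (p : ℝ) ^ 2 := by rw [hDR, hpR]; nlinarith
    exact_mod_cast this
  have hdiv : D / p ≤ p := by rw [div_le_iff₀ hp0]; nlinarith
  have hdiv0 : 0 ≤ D / p := by positivity
  refine ⟨p, (p + D / p) / 2, (p - D / p) / 2, by linarith, by linarith, by linarith, ?_⟩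
  have hsq : (((p + D / p) / 2 : ℚ) : ℝ) ^ 2 - (((p - D / p) / 2 : ℚ) : ℝ) ^ 2 =
      ((lam - mu) / 2) ^ 2 := by
    rw [← hDR]
    have : (p : ℝ) ≠ 0 := by exact_mod_cast hp0.ne'
    push_cast
    field_simp
    ring
  rw [hsq, Real.sqrt_sq_eq_abs, hpR]
  rcases abs_cases ((lam - mu) / 2) with ⟨h, _⟩ | ⟨h, _⟩
  · left; rw [h]; ring
  · right; rw [h]; ring

/-! ### Squares and the tiling of the torus -/

/-- A square of the plane given by linear inequalities: `(dirX, dirY)` is the unit vector along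
one pair of sides, and in the orthonormal coordinates along that vector and its rotation by `90°`
the square is `[x, x + side] × [y, y + side]`. -/
structure TiltedSquare where
  /-- first coordinate of the direction of the sides -/
  dirX : ℝ
  /-- second coordinate of the direction of the sides -/
  dirY : ℝ
  /-- first rotated coordinate of the lowest corner -/
  x : ℝ
  /-- second rotated coordinate of the lowest corner -/
  y : ℝ
  /-- side length -/
  side : ℝ
  unit : dirX ^ 2 + dirY ^ 2 = 1
  side_pos : 0 < side

namespace TiltedSquare

/-- The closed region bounded by the square. -/
def closed (Q : TiltedSquare) : Set (ℝ × ℝ) :=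
  {p | (Q.x ≤ Q.dirX * p.1 + Q.dirY * p.2 ∧ Q.dirX * p.1 + Q.dirY * p.2 ≤ Q.x + Q.side) ∧
    Q.y ≤ -Q.dirY * p.1 + Q.dirX * p.2 ∧ -Q.dirY * p.1 + Q.dirX * p.2 ≤ Q.y + Q.side}

/-- The open region bounded by the square. -/
def opened (Q : TiltedSquare) : Set (ℝ × ℝ) :=
  {p | (Q.x < Q.dirX * p.1 + Q.dirY * p.2 ∧ Q.dirX * p.1 + Q.dirY * p.2 < Q.x + Q.side) ∧
    Q.y < -Q.dirY * p.1 + Q.dirX * p.2 ∧ -Q.dirY * p.1 + Q.dirX * p.2 < Q.y + Q.side}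

/-- The image of the square under `p ↦ -p`. -/
def neg (Q : TiltedSquare) : TiltedSquare :=
  ⟨Q.dirX, Q.dirY, -Q.x - Q.side, -Q.y - Q.side, Q.side, Q.unit, Q.side_pos⟩

/-- The same square, described by the direction rotated by `90°`. -/
def rot (Q : TiltedSquare) : TiltedSquare :=
  ⟨-Q.dirY, Q.dirX, Q.y, -Q.x - Q.side, Q.side, by linarith [Q.unit], Q.side_pos⟩

theorem isOpen_opened (Q : TiltedSquare) : IsOpen Q.opened := by
  refine IsOpen.and (IsOpen.and ?_ ?_) (IsOpen.and ?_ ?_) <;>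
    exact isOpen_lt (by fun_prop) (by fun_prop)

theorem isClosed_closed (Q : TiltedSquare) : IsClosed Q.closed := by
  refine IsClosed.and (IsClosed.and ?_ ?_) (IsClosed.and ?_ ?_) <;>
    exact isClosed_le (by fun_prop) (by fun_prop)

theorem opened_subset_closed (Q : TiltedSquare) : Q.opened ⊆ Q.closed :=
  fun _ h => ⟨⟨h.1.1.le, h.1.2.le⟩, h.2.1.le, h.2.2.le⟩

theorem opened_subset_interior (Q : TiltedSquare) : Q.opened ⊆ interior Q.closed :=
  interior_maximal Q.opened_subset_closed Q.isOpen_opened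

theorem mem_neg_closed (Q : TiltedSquare) (p : ℝ × ℝ) : p ∈ Q.neg.closed ↔ -p ∈ Q.closed := by
  simp only [closed, neg, mem_ofPred_eq, Prod.fst_neg, Prod.snd_neg]
  constructor
  · rintro ⟨⟨_, _⟩, _, _⟩; refine ⟨⟨?_, ?_⟩, ?_, ?_⟩ <;> linarith
  · rintro ⟨⟨_, _⟩, _, _⟩; refine ⟨⟨?_, ?_⟩, ?_, ?_⟩ <;> linarith

theorem mem_neg_opened (Q : TiltedSquare) (p : ℝ × ℝ) : p ∈ Q.neg.opened ↔ -p ∈ Q.opened := by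
  simp only [opened, neg, mem_ofPred_eq, Prod.fst_neg, Prod.snd_neg]
  constructor
  · rintro ⟨⟨_, _⟩, _, _⟩; refine ⟨⟨?_, ?_⟩, ?_, ?_⟩ <;> linarith
  · rintro ⟨⟨_, _⟩, _, _⟩; refine ⟨⟨?_, ?_⟩, ?_, ?_⟩ <;> linarith

theorem rot_closed (Q : TiltedSquare) : Q.rot.closed = Q.closed := by
  ext p
  simp only [closed, rot, mem_ofPred_eq]
  constructor
  · rintro ⟨⟨_, _⟩, _, _⟩; refine ⟨⟨?_, ?_⟩, ?_, ?_⟩ <;> linarith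
  · rintro ⟨⟨_, _⟩, _, _⟩; refine ⟨⟨?_, ?_⟩, ?_, ?_⟩ <;> linarith

theorem rot_opened (Q : TiltedSquare) : Q.rot.opened = Q.opened := by
  ext p
  simp only [opened, rot, mem_ofPred_eq]
  constructor
  · rintro ⟨⟨_, _⟩, _, _⟩; refine ⟨⟨?_, ?_⟩, ?_, ?_⟩ <;> linarith
  · rintro ⟨⟨_, _⟩, _, _⟩; refine ⟨⟨?_, ?_⟩, ?_, ?_⟩ <;> linarith

/-- The point with rotated coordinates `(a, b)`. -/
def pt (Q : TiltedSquare) (a b : ℝ) : ℝ × ℝ := (Q.dirX * a - Q.dirY * b, Q.dirY * a + Q.dirX * b)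

theorem pt_fst (Q : TiltedSquare) (a b : ℝ) :
    Q.dirX * (Q.pt a b).1 + Q.dirY * (Q.pt a b).2 = a := by
  simp only [pt]; linear_combination a * Q.unit

theorem pt_snd (Q : TiltedSquare) (a b : ℝ) :
    -Q.dirY * (Q.pt a b).1 + Q.dirX * (Q.pt a b).2 = b := by
  simp only [pt]; linear_combination b * Q.unit

theorem opened_nonempty (Q : TiltedSquare) : Q.opened.Nonempty := by
  have := Q.side_pos
  refine ⟨Q.pt (Q.x + Q.side / 2) (Q.y + Q.side / 2), ?_⟩
  simp only [opened, mem_ofPred_eq, pt_fst, pt_snd]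
  refine ⟨⟨?_, ?_⟩, ?_, ?_⟩ <;> linarith

/-- Points of a closed square are limits of points of the open one, so an open set that meets the
former meets the latter. -/
theorem closed_subset_closure (Q : TiltedSquare) : Q.closed ⊆ closure Q.opened := by
  intro p hp
  obtain ⟨z, hz⟩ := Q.opened_nonempty
  have hmem : ∀ t ∈ Ioo (0 : ℝ) 1, (1 - t) • p + t • z ∈ Q.opened := by
    rintro t ⟨h0, h1⟩
    obtain ⟨⟨p1, p2⟩, p3, p4⟩ := hp
    obtain ⟨⟨z1, z2⟩, z3, z4⟩ := hz
    have h1' : 0 < 1 - t := by linarith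
    simp only [opened, mem_ofPred_eq, Prod.fst_add, Prod.snd_add, Prod.smul_fst, Prod.smul_snd,
      smul_eq_mul]
    refine ⟨⟨?_, ?_⟩, ?_, ?_⟩ <;> nlinarith
  have hlim : Filter.Tendsto (fun t : ℝ => (1 - t) • p + t • z) (nhdsWithin 0 (Ioi 0))
      (nhds p) := by
    have : Continuous fun t : ℝ => (1 - t) • p + t • z := by fun_prop
    have h := this.tendsto 0
    simp only [sub_zero, one_smul, zero_smul, add_zero] at h
    exact h.mono_left nhdsWithin_le_nhds
  refine mem_closure_of_tendsto hlim ?_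
  filter_upwards [Ioo_mem_nhdsGT (show (0 : ℝ) < 1 by norm_num)] with t ht using hmem t ht

theorem abs_le_of_mem (Q : TiltedSquare) : ∃ C, ∀ p ∈ Q.closed, |p.1| ≤ C ∧ |p.2| ≤ C := by
  have hx : |Q.dirX| ≤ 1 := by rw [← sq_le_one_iff_abs_le_one]; nlinarith [Q.unit, sq_nonneg Q.dirY]
  have hy : |Q.dirY| ≤ 1 := by rw [← sq_le_one_iff_abs_le_one]; nlinarith [Q.unit, sq_nonneg Q.dirX]
  refine ⟨(|Q.x| + Q.side) + (|Q.y| + Q.side), fun p hp => ?_⟩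
  obtain ⟨⟨h1, h2⟩, h3, h4⟩ := hp
  set X := Q.dirX * p.1 + Q.dirY * p.2 with hX
  set Y := -Q.dirY * p.1 + Q.dirX * p.2 with hY
  have e1 : p.1 = Q.dirX * X - Q.dirY * Y := by rw [hX, hY]; linear_combination -p.1 * Q.unit
  have e2 : p.2 = Q.dirY * X + Q.dirX * Y := by rw [hX, hY]; linear_combination -p.2 * Q.unit
  have hXb : |X| ≤ |Q.x| + Q.side := by
    rw [abs_le]; constructor <;> linarith [neg_abs_le Q.x, le_abs_self Q.x, Q.side_pos]
  have hYb : |Y| ≤ |Q.y| + Q.side := by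
    rw [abs_le]; constructor <;> linarith [neg_abs_le Q.y, le_abs_self Q.y, Q.side_pos]
  constructor
  · rw [e1]
    refine (abs_sub _ _).trans ?_
    rw [abs_mul, abs_mul]
    nlinarith [abs_nonneg X, abs_nonneg Y]
  · rw [e2]
    refine (abs_add_le _ _).trans ?_
    rw [abs_mul, abs_mul]
    nlinarith [abs_nonneg X, abs_nonneg Y]

end TiltedSquare

theorem IsSquarePlane.exists_tilted {S : Set (ℝ × ℝ)} (h : IsSquarePlane S) :
    ∃ Q : TiltedSquare, Q.closed = S := by
  obtain ⟨s, hs, c, θ, rfl⟩ := h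
  have hu := Real.cos_sq_add_sin_sq θ
  refine ⟨⟨Real.cos θ, Real.sin θ, Real.cos θ * c.1 + Real.sin θ * c.2,
    -Real.sin θ * c.1 + Real.cos θ * c.2, s, hu, hs⟩, ?_⟩
  ext p
  simp only [TiltedSquare.closed, mem_ofPred_eq, mem_image, mem_prod, mem_Icc, Prod.exists]
  constructor
  · rintro ⟨⟨h1, h2⟩, h3, h4⟩
    refine ⟨Real.cos θ * (p.1 - c.1) + Real.sin θ * (p.2 - c.2),
      -Real.sin θ * (p.1 - c.1) + Real.cos θ * (p.2 - c.2),
      ⟨⟨by linarith, by linarith⟩, by linarith, by linarith⟩, ?_⟩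
    ext
    · simp only; linear_combination (p.1 - c.1) * hu
    · simp only; linear_combination (p.2 - c.2) * hu
  · rintro ⟨a, b, ⟨⟨h1, h2⟩, h3, h4⟩, rfl⟩
    have e1 : Real.cos θ * (c.1 + a * Real.cos θ - b * Real.sin θ) +
        Real.sin θ * (c.2 + a * Real.sin θ + b * Real.cos θ) =
        Real.cos θ * c.1 + Real.sin θ * c.2 + a := by linear_combination a * hu
    have e2 : -Real.sin θ * (c.1 + a * Real.cos θ - b * Real.sin θ) +
        Real.cos θ * (c.2 + a * Real.sin θ + b * Real.cos θ) =
        -Real.sin θ * c.1 + Real.cos θ * c.2 + b := by linear_combination b * hu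
    simp only [e1, e2]
    refine ⟨⟨?_, ?_⟩, ?_, ?_⟩ <;> linarith

/-- The vector `(2m, 2nλ)` of the lattice `2L`. -/
def latVec (lam : ℝ) : ℤ × ℤ →+ ℝ × ℝ where
  toFun z := (2 * (z.1 : ℝ), 2 * (z.2 : ℝ) * lam)
  map_zero' := by simp
  map_add' z w := by ext <;> simp <;> ring

theorem latVec_apply (lam : ℝ) (z : ℤ × ℤ) :
    latVec lam z = (2 * (z.1 : ℝ), 2 * (z.2 : ℝ) * lam) := rfl

theorem latVec_injective {lam : ℝ} (hpos : 0 < lam) : Function.Injective (latVec lam) := by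
  intro z w h
  simp only [latVec_apply, Prod.mk.injEq] at h
  ext
  · have : (z.1 : ℝ) = w.1 := by linarith [h.1]
    exact_mod_cast this
  · have : (z.2 : ℝ) = w.2 := by
      have := mul_right_cancel₀ hpos.ne' h.2
      linarith
    exact_mod_cast this

theorem latVec_mem (lam : ℝ) (z : ℤ × ℤ) : latVec lam z ∈ twoLatticeL lam := ⟨z.1, z.2, rfl⟩

theorem exists_latVec_of_mem {lam : ℝ} {v : ℝ × ℝ} (h : v ∈ twoLatticeL lam) :
    ∃ z, v = latVec lam z := by
  obtain ⟨m, n, h⟩ := h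
  exact ⟨(m, n), h⟩

theorem latVec_finite {lam : ℝ} (hpos : 0 < lam) (C : ℝ) :
    {z | |(latVec lam z).1| ≤ C ∧ |(latVec lam z).2| ≤ C}.Finite := by
  refine ((finite_Icc (-⌈C⌉) ⌈C⌉).prod (finite_Icc (-⌈C / lam⌉) ⌈C / lam⌉)).subset ?_
  rintro ⟨m, n⟩ ⟨h1, h2⟩
  simp only [latVec_apply] at h1 h2
  rw [abs_mul, abs_of_pos hpos, ← le_div_iff₀ hpos] at h2
  have a1 : |(m : ℝ)| ≤ C := by
    rw [abs_mul] at h1; norm_num at h1; linarith [abs_nonneg (m : ℝ)]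
  have a2 : |(n : ℝ)| ≤ C / lam := by
    rw [abs_mul] at h2; norm_num at h2; linarith [abs_nonneg (n : ℝ)]
  have b1 : |m| ≤ ⌈C⌉ := by
    have := a1.trans (Int.le_ceil C); exact_mod_cast this
  have b2 : |n| ≤ ⌈C / lam⌉ := by
    have := a2.trans (Int.le_ceil _); exact_mod_cast this
  exact ⟨abs_le.mp b1, abs_le.mp b2⟩

/-- The translates by `2L` of the squares of the family `Q` tile the plane: the closed squares cover
it and the open ones are pairwise disjoint. -/
structure IsLatticeTiling (lam : ℝ) {ι : Type} (Q : ι → TiltedSquare) : Prop where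
  cover : ∀ p, ∃ i z, p - latVec lam z ∈ (Q i).closed
  disj : ∀ i z j w p, p - latVec lam z ∈ (Q i).opened → p - latVec lam w ∈ (Q j).opened →
    i = j ∧ z = w

/-- The squares of a covering together with their images under `p ↦ -p` tile the torus
`ℝ² / 2L`. -/
theorem IsBothSidesSquareCovering.exists_tiling {lam : ℝ} (hpos : 0 < lam)
    {Γ : Set (Set (ℝ × ℝ))} (hΓ : IsBothSidesSquareCovering lam Γ) :
    ∃ (ι : Type) (_ : Finite ι) (Q : ι → TiltedSquare), IsLatticeTiling lam Q := by
  obtain ⟨hfin, hsq, hdisj, hcov, hinj⟩ := hΓ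
  choose q hq using fun S : Γ => (hsq S S.2).exists_tilted
  have := hfin.to_subtype
  -- `(S, true)` stands for `S` and `(S, false)` for `-S`
  let Q : Γ × Bool → TiltedSquare := fun x => if x.2 then q x.1 else (q x.1).neg
  refine ⟨Γ × Bool, inferInstance, Q, ?_, ?_⟩
  · intro p
    obtain ⟨r, ⟨S, hS, hr⟩, h | h⟩ := hcov p
    · obtain ⟨z, hz⟩ := exists_latVec_of_mem h
      refine ⟨(⟨S, hS⟩, true), -z, ?_⟩
      have : p - latVec lam (-z) = r := by rw [map_neg, ← hz]; abel
      rw [this]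
      simpa [Q, hq] using hr
    · obtain ⟨z, hz⟩ := exists_latVec_of_mem h
      refine ⟨(⟨S, hS⟩, false), z, ?_⟩
      have : p - latVec lam z = -r := by rw [← hz]; abel
      rw [this]
      simpa [Q, hq, TiltedSquare.mem_neg_closed] using hr
  · have hIntr : ∀ S : Γ, ∀ p ∈ (q S).opened, p ∈ interior (S : Set (ℝ × ℝ)) := by
      intro S p hp
      have := (q S).opened_subset_interior hp
      rwa [hq] at this
    have hIntr' : ∀ S : Γ, ∀ p ∈ (q S).opened, p ∈ interior (⋃₀ Γ) := fun S p hp =>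
      interior_mono (subset_sUnion_of_mem S.2) (hIntr S p hp)
    -- two equivalent points of open squares coincide, and so do the squares
    have hpt : ∀ (S T : Γ) (a b : ℝ × ℝ), a ∈ (q S).opened → b ∈ (q T).opened →
        ComplexEquiv lam a b → a = b ∧ S = T := by
      intro S T a b ha hb hab
      have hEq : a = b := by
        by_contra hne
        exact hinj a (hIntr' S a ha) b (hIntr' T b hb) hne hab
      refine ⟨hEq, ?_⟩
      by_contra hne
      have := hdisj S S.2 T T.2 (fun h => hne (Subtype.ext h))
      exact (this ▸ (⟨hIntr S a ha, hEq ▸ hIntr T b hb⟩ : a ∈ interior (S : Set (ℝ × ℝ)) ∩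
        interior (T : Set (ℝ × ℝ))) : a ∈ (∅ : Set (ℝ × ℝ)))
    -- A point common to an open square and a reflected one is determined by the two lattice
    -- vectors, which is impossible since the common points form an open set.
    have hmix : ∀ (S T : Γ) (z w : ℤ × ℤ) (p : ℝ × ℝ), p - latVec lam z ∈ (q S).opened →
        -(p - latVec lam w) ∈ (q T).opened → False := by
      intro S T z w p h1 h2
      have hfix : ∀ r : ℝ × ℝ, r - latVec lam z ∈ (q S).opened →
          -(r - latVec lam w) ∈ (q T).opened → r + r = latVec lam (z + w) := by
        intro r hr1 hr2
        have hE : ComplexEquiv lam (r - latVec lam z) (-(r - latVec lam w)) := by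
          right
          have : -(r - latVec lam w) + (r - latVec lam z) = latVec lam (w - z) := by
            rw [map_sub]; abel
          rw [this]; exact latVec_mem _ _
        have := (hpt S T _ _ hr1 hr2 hE).1
        rw [map_add]
        have h3 : r = -(r - latVec lam w) + latVec lam z := by rw [← this]; abel
        nth_rewrite 2 [h3]; abel
      have hopen : IsOpen ({r | r - latVec lam z ∈ (q S).opened} ∩
          {r | -(r - latVec lam w) ∈ (q T).opened}) := by
        refine IsOpen.inter ((q S).isOpen_opened.preimage ?_) ((q T).isOpen_opened.preimage ?_) <;>
          fun_prop
      have hcont : Filter.Tendsto (fun t : ℝ => p + (t, 0)) (nhdsWithin 0 (Ioi 0)) (nhds p) := by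
        have : Continuous fun t : ℝ => p + (t, 0) := by fun_prop
        have h := this.tendsto 0
        have e : p + ((0 : ℝ), (0 : ℝ)) = p := by ext <;> simp
        rw [e] at h
        exact h.mono_left nhdsWithin_le_nhds
      obtain ⟨t, ht, ht0⟩ := ((hcont.eventually (hopen.mem_nhds ⟨h1, h2⟩)).and
        self_mem_nhdsWithin).exists
      have e1 := congrArg Prod.fst (hfix p h1 h2)
      have e2 := congrArg Prod.fst (hfix _ ht.1 ht.2)
      simp only [Prod.fst_add] at e1 e2
      have : 0 < t := ht0
      linarith
    rintro ⟨S, _ | _⟩ z ⟨T, _ | _⟩ w p h1 h2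
    · simp only [Q, Bool.false_eq_true, if_false, TiltedSquare.mem_neg_opened] at h1 h2
      have hE : ComplexEquiv lam (-(p - latVec lam z)) (-(p - latVec lam w)) := by
        left
        have : -(p - latVec lam w) - -(p - latVec lam z) = latVec lam (w - z) := by
          rw [map_sub]; abel
        rw [this]; exact latVec_mem _ _
      obtain ⟨e, rfl⟩ := hpt S T _ _ h1 h2 hE
      exact ⟨rfl, latVec_injective hpos (by simpa using e)⟩
    · simp only [Q, Bool.false_eq_true, if_false, if_true, TiltedSquare.mem_neg_opened] at h1 h2
      exact (hmix T S w z p h2 h1).elim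
    · simp only [Q, Bool.false_eq_true, if_false, if_true, TiltedSquare.mem_neg_opened] at h1 h2
      exact (hmix S T z w p h1 h2).elim
    · simp only [Q, if_true] at h1 h2
      have hE : ComplexEquiv lam (p - latVec lam z) (p - latVec lam w) := by
        left
        have : p - latVec lam w - (p - latVec lam z) = latVec lam (z - w) := by
          rw [map_sub]; abel
        rw [this]; exact latVec_mem _ _
      obtain ⟨e, rfl⟩ := hpt S T _ _ h1 h2 hE
      exact ⟨rfl, latVec_injective hpos (by simpa using e)⟩

/-! ### All squares of the tiling are parallel -/

namespace TiltedSquare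

/-- Every square is described by a direction in the half-open first quadrant. -/
theorem exists_normalized (Q : TiltedSquare) : ∃ R : TiltedSquare,
    R.closed = Q.closed ∧ R.opened = Q.opened ∧ 0 < R.dirX ∧ 0 ≤ R.dirY := by
  have hu := Q.unit
  by_cases h1 : 0 < Q.dirX
  · by_cases h2 : 0 ≤ Q.dirY
    · exact ⟨Q, rfl, rfl, h1, h2⟩
    · exact ⟨Q.rot, Q.rot_closed, Q.rot_opened, by simp only [rot]; linarith,
        by simp only [rot]; linarith⟩
  · by_cases h2 : 0 < Q.dirY
    · exact ⟨Q.rot.rot.rot, by simp only [rot_closed], by simp only [rot_opened],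
        by simp only [rot]; linarith, by simp only [rot]; linarith⟩
    · by_cases h3 : Q.dirX = 0
      · have : Q.dirY < 0 := by
          refine lt_of_le_of_ne (not_lt.mp h2) fun h => ?_
          rw [h3, h] at hu; norm_num at hu
        exact ⟨Q.rot, Q.rot_closed, Q.rot_opened, by simp only [rot]; linarith,
          by simp only [rot]; linarith⟩
      · have : Q.dirX < 0 := lt_of_le_of_ne (not_lt.mp h1) h3
        exact ⟨Q.rot.rot, by simp only [rot_closed], by simp only [rot_opened],
          by simp only [rot]; linarith, by simp only [rot]; linarith⟩

/-- The four lines that carry the sides; the first flag selects one of the two directions, the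
second one of the two parallel sides. -/
def sideLine (Q : TiltedSquare) (e t : Bool) : Set (ℝ × ℝ) :=
  {p | (if e then Q.dirX * p.1 + Q.dirY * p.2 else -Q.dirY * p.1 + Q.dirX * p.2) =
    (if e then Q.x else Q.y) + (if t then Q.side else 0)}

theorem exists_sideLine (Q : TiltedSquare) {p : ℝ × ℝ} (h : p ∈ Q.closed) (h' : p ∉ Q.opened) :
    ∃ e t, p ∈ Q.sideLine e t := by
  by_contra! hne
  have h1 := hne true true
  have h2 := hne true false
  have h3 := hne false true
  have h4 := hne false false
  simp only [sideLine, mem_ofPred_eq, if_true, Bool.false_eq_true, if_false, add_zero] at h1 h2 h3 h4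
  exact h' ⟨⟨lt_of_le_of_ne h.1.1 (Ne.symm h2), lt_of_le_of_ne h.1.2 h1⟩,
    lt_of_le_of_ne h.2.1 (Ne.symm h4), lt_of_le_of_ne h.2.2 h3⟩

theorem eq_of_linear_eq {a b c d : ℝ} (hdet : a * d - b * c ≠ 0) {p q : ℝ × ℝ}
    (h1 : a * p.1 + b * p.2 = a * q.1 + b * q.2) (h2 : c * p.1 + d * p.2 = c * q.1 + d * q.2) :
    p = q := by
  ext
  · refine sub_eq_zero.mp ((mul_eq_zero.mp ?_).resolve_left hdet)
    linear_combination d * h1 - b * h2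
  · refine sub_eq_zero.mp ((mul_eq_zero.mp ?_).resolve_left hdet)
    linear_combination a * h2 - c * h1

theorem sideLine_inter_subsingleton (Q R : TiltedSquare) (v v' : ℝ × ℝ)
    (h1 : Q.dirX * R.dirY - Q.dirY * R.dirX ≠ 0) (h2 : Q.dirX * R.dirX + Q.dirY * R.dirY ≠ 0)
    (e t e' t' : Bool) :
    {p | p - v ∈ Q.sideLine e t ∧ p - v' ∈ R.sideLine e' t'}.Subsingleton := by
  rintro p ⟨hp1, hp2⟩ q ⟨hq1, hq2⟩
  have e1 := hp1.trans hq1.symm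
  have e2 := hp2.trans hq2.symm
  simp only [Prod.fst_sub, Prod.snd_sub] at e1 e2
  rcases e <;> rcases e' <;> simp only [if_true, Bool.false_eq_true, if_false] at e1 e2
  · refine eq_of_linear_eq (a := -Q.dirY) (b := Q.dirX) (c := -R.dirY) (d := R.dirX) ?_
      (by linarith) (by linarith)
    intro h; exact h1 (by linarith)
  · refine eq_of_linear_eq (a := -Q.dirY) (b := Q.dirX) (c := R.dirX) (d := R.dirY) ?_
      (by linarith) (by linarith)
    intro h; exact h2 (by linarith)
  · refine eq_of_linear_eq (a := Q.dirX) (b := Q.dirY) (c := -R.dirY) (d := R.dirX) ?_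
      (by linarith) (by linarith)
    intro h; exact h2 (by linarith)
  · refine eq_of_linear_eq (a := Q.dirX) (b := Q.dirY) (c := R.dirX) (d := R.dirY) ?_
      (by linarith) (by linarith)
    exact h1

end TiltedSquare

/-- The translate of the closed square `Q x.1` by the vector of `2L` with coordinates `x.2`. -/
def tile (lam : ℝ) {ι : Type} (Q : ι → TiltedSquare) (x : ι × (ℤ × ℤ)) : Set (ℝ × ℝ) :=
  {p | p - latVec lam x.2 ∈ (Q x.1).closed}

theorem locallyFinite_tile {lam : ℝ} (hpos : 0 < lam) {ι : Type} [Finite ι]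
    (Q : ι → TiltedSquare) : LocallyFinite (tile lam Q) := by
  intro p
  choose C hC using fun i => (Q i).abs_le_of_mem
  refine ⟨Metric.ball p 1, Metric.ball_mem_nhds p one_pos, ?_⟩
  have hfin : (⋃ i, (fun z => (i, z)) '' {z | |(latVec lam z).1| ≤ |p.1| + |p.2| + 1 + C i ∧
      |(latVec lam z).2| ≤ |p.1| + |p.2| + 1 + C i}).Finite :=
    finite_iUnion fun i => (latVec_finite hpos _).image _
  refine hfin.subset ?_
  rintro ⟨i, z⟩ ⟨q, hq, hqp⟩
  simp only [mem_iUnion]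
  refine ⟨i, z, ?_, rfl⟩
  obtain ⟨h1, h2⟩ := hC i _ hq
  rw [Metric.mem_ball, Prod.dist_eq, max_lt_iff, Real.dist_eq, Real.dist_eq] at hqp
  obtain ⟨h3, h4⟩ := hqp
  simp only [Prod.fst_sub, Prod.snd_sub] at h1 h2
  have := abs_nonneg p.1
  have := abs_nonneg p.2
  constructor
  · have := abs_sub_abs_le_abs_sub (latVec lam z).1 q.1
    rw [abs_sub_comm] at this
    have := abs_sub_abs_le_abs_sub q.1 p.1
    linarith
  · have := abs_sub_abs_le_abs_sub (latVec lam z).2 q.2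
    rw [abs_sub_comm] at this
    have := abs_sub_abs_le_abs_sub q.2 p.2
    linarith

theorem isClosed_tile (lam : ℝ) {ι : Type} (Q : ι → TiltedSquare) (x : ι × (ℤ × ℤ)) :
    IsClosed (tile lam Q x) :=
  (Q x.1).isClosed_closed.preimage (by fun_prop)

/-- The open part of a translate of `Q i` is disjoint from the closed translates of the other
squares `Q j`. -/
theorem IsLatticeTiling.opened_not_mem {lam : ℝ} {ι : Type} {Q : ι → TiltedSquare}
    (hT : IsLatticeTiling lam Q) {i j : ι} {z w : ℤ × ℤ} {p : ℝ × ℝ} (hij : i ≠ j)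
    (hp : p - latVec lam z ∈ (Q i).opened) : p - latVec lam w ∉ (Q j).closed := by
  intro hq
  have hcl := (Q j).closed_subset_closure hq
  have hopen : IsOpen {r | r + latVec lam w - latVec lam z ∈ (Q i).opened} :=
    (Q i).isOpen_opened.preimage (by fun_prop)
  obtain ⟨r, hr1, hr2⟩ := mem_closure_iff.mp hcl _ hopen (by simpa using hp)
  exact hij (hT.disj i z j w (r + latVec lam w) hr1 (by simpa using hr2)).1

/-- All squares of the tiling have the same direction: otherwise the squares parallel to `Q i₀`
and the remaining ones form two closed sets that cover the plane and meet in countably many points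
only (intersections of non-parallel sides), while the plane without a countable set is connected. -/
theorem IsLatticeTiling.parallel {lam : ℝ} (hpos : 0 < lam) {ι : Type} [Finite ι]
    {Q : ι → TiltedSquare} (hT : IsLatticeTiling lam Q)
    (hX : ∀ i, 0 < (Q i).dirX) (hY : ∀ i, 0 ≤ (Q i).dirY) (i₀ j₀ : ι) :
    (Q j₀).dirX = (Q i₀).dirX ∧ (Q j₀).dirY = (Q i₀).dirY := by
  classical
  by_contra hne
  let C : Set ι := {i | (Q i).dirX = (Q i₀).dirX ∧ (Q i).dirY = (Q i₀).dirY}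
  have hclosed : ∀ D : Set ι, IsClosed (⋃ x : {x : ι × (ℤ × ℤ) // x.1 ∈ D}, tile lam Q x) := by
    intro D
    exact ((locallyFinite_tile hpos Q).comp_injective
      Subtype.val_injective).isClosed_iUnion fun x => isClosed_tile lam Q x
  set U := ⋃ x : {x : ι × (ℤ × ℤ) // x.1 ∈ C}, tile lam Q x
  set W := ⋃ x : {x : ι × (ℤ × ℤ) // x.1 ∈ Cᶜ}, tile lam Q x
  have hcount : (U ∩ W).Countable := by
    have hsub : U ∩ W ⊆ ⋃ x : {x : ι × (ℤ × ℤ) // x.1 ∈ C},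
        ⋃ y : {x : ι × (ℤ × ℤ) // x.1 ∈ Cᶜ}, ⋃ e, ⋃ t, ⋃ e', ⋃ t',
        {p | p - latVec lam x.1.2 ∈ (Q x.1.1).sideLine e t ∧
          p - latVec lam y.1.2 ∈ (Q y.1.1).sideLine e' t'} := by
      rintro p ⟨hpU, hpW⟩
      obtain ⟨x, hx⟩ := mem_iUnion.mp hpU
      obtain ⟨y, hy⟩ := mem_iUnion.mp hpW
      have hxy : x.1.1 ≠ y.1.1 := fun h => y.2 (h ▸ x.2)
      obtain ⟨e, t, het⟩ := (Q x.1.1).exists_sideLine hx fun h => hT.opened_not_mem hxy h hy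
      obtain ⟨e', t', het'⟩ := (Q y.1.1).exists_sideLine hy
        fun h => hT.opened_not_mem hxy.symm h hx
      simp only [mem_iUnion]
      exact ⟨x, y, e, t, e', t', het, het'⟩
    refine Set.Countable.mono hsub ?_
    refine countable_iUnion fun x => countable_iUnion fun y => countable_iUnion fun e =>
      countable_iUnion fun t => countable_iUnion fun e' => countable_iUnion fun t' =>
      (TiltedSquare.sideLine_inter_subsingleton _ _ _ _ ?_ ?_ e t e' t').countable
    · -- parallel unit vectors of the first quadrant coincide
      intro h
      refine y.2 ?_
      have hx : (Q x.1.1).dirX = (Q i₀).dirX ∧ (Q x.1.1).dirY = (Q i₀).dirY := x.2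
      change (Q y.1.1).dirX = (Q i₀).dirX ∧ (Q y.1.1).dirY = (Q i₀).dirY
      rw [← hx.1, ← hx.2]
      have u1 := (Q x.1.1).unit
      have u2 := (Q y.1.1).unit
      have p1 := hX x.1.1
      have p2 := hX y.1.1
      have hsq : (Q y.1.1).dirX ^ 2 = (Q x.1.1).dirX ^ 2 := by
        linear_combination -((Q x.1.1).dirX * (Q y.1.1).dirY + (Q x.1.1).dirY * (Q y.1.1).dirX) * h +
          (Q y.1.1).dirX ^ 2 * (-u1) + (Q x.1.1).dirX ^ 2 * (u2)
      have hEq : (Q y.1.1).dirX = (Q x.1.1).dirX := by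
        rwa [sq_eq_sq₀ p2.le p1.le] at hsq
      refine ⟨hEq, ?_⟩
      rw [hEq] at h
      have : (Q x.1.1).dirX * ((Q y.1.1).dirY - (Q x.1.1).dirY) = 0 := by linarith
      linarith [(mul_eq_zero.mp this).resolve_left p1.ne']
    · exact (add_pos_of_pos_of_nonneg (mul_pos (hX _) (hX _)) (mul_nonneg (hY _) (hY _))).ne'
  have hconn : IsPreconnected (U ∩ W)ᶜ :=
    (hcount.isConnected_compl_of_one_lt_rank (by simp [one_add_one_eq_two])).isPreconnected
  have hne' : ∀ (D : Set ι) (i : ι), i ∈ D → ∃ p, p ∈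
      (⋃ x : {x : ι × (ℤ × ℤ) // x.1 ∈ D}, tile lam Q x) ∧
      p ∉ ⋃ x : {x : ι × (ℤ × ℤ) // x.1 ∈ Dᶜ}, tile lam Q x := by
    intro D i hi
    obtain ⟨p, hp⟩ := (Q i).opened_nonempty
    have hp' : p - latVec lam 0 ∈ (Q i).opened := by simpa using hp
    refine ⟨p, mem_iUnion.mpr ⟨⟨(i, 0), hi⟩, (Q i).opened_subset_closed hp'⟩, ?_⟩
    intro h
    obtain ⟨y, hy⟩ := mem_iUnion.mp h
    exact hT.opened_not_mem (fun h : i = y.1.1 => y.2 (h ▸ hi)) hp' hy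
  obtain ⟨p, hpU, hpW⟩ := hne' C i₀ ⟨rfl, rfl⟩
  obtain ⟨q, hqW, hqU⟩ := hne' Cᶜ j₀ hne
  rw [compl_compl] at hqU
  obtain ⟨r, hr1, hr2⟩ := isPreconnected_closed_iff.mp hconn U W (hclosed C) (hclosed Cᶜ)
    (by
      intro r _
      obtain ⟨i, z, h⟩ := hT.cover r
      by_cases hi : i ∈ C
      · exact Or.inl (mem_iUnion.mpr ⟨⟨(i, z), hi⟩, h⟩)
      · exact Or.inr (mem_iUnion.mpr ⟨⟨(i, z), hi⟩, h⟩))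
    ⟨p, fun h => hpW h.2, hpU⟩ ⟨q, fun h => hqU h.1, hqW⟩
  exact hr1 hr2

/-! ### From the tiling to the quadratic inequality -/

/-- The vector `(2m, 2nλ)` in the coordinates along `(α, β)` and `(-β, α)`. -/
def rotLatVec (lam α β : ℝ) : ℤ × ℤ →+ ℝ × ℝ where
  toFun z := (α * (latVec lam z).1 + β * (latVec lam z).2,
    -β * (latVec lam z).1 + α * (latVec lam z).2)
  map_zero' := by simp
  map_add' z w := by ext <;> simp <;> ring

theorem rotLatVec_fst (lam α β : ℝ) (z : ℤ × ℤ) :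
    (rotLatVec lam α β z).1 = α * (latVec lam z).1 + β * (latVec lam z).2 := rfl

theorem rotLatVec_snd (lam α β : ℝ) (z : ℤ × ℤ) :
    (rotLatVec lam α β z).2 = -β * (latVec lam z).1 + α * (latVec lam z).2 := rfl

/-- A tiling by closed squares yields a partition of the plane into half-open squares: a point
belongs to the half-open square that contains its small displacements along the diagonal. -/
theorem IsLatticeTiling.halfOpen {lam : ℝ} (hpos : 0 < lam) {ι : Type} [Finite ι]
    {Q : ι → TiltedSquare} (hT : IsLatticeTiling lam Q) {α β : ℝ}
    (hα : ∀ i, (Q i).dirX = α) (hβ : ∀ i, (Q i).dirY = β) (hu : α ^ 2 + β ^ 2 = 1) (p : ℝ × ℝ) :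
    ∃! x : ι × (ℤ × ℤ), p - rotLatVec lam α β x.2 ∈
      hoRect ((Q x.1).x, (Q x.1).y) ((Q x.1).x + (Q x.1).side, (Q x.1).y + (Q x.1).side) := by
  obtain ⟨X, Y⟩ := p
  -- the displaced point, in the original coordinates
  let r : ℝ → ℝ × ℝ := fun t => (α * (X + t) - β * (Y + t), β * (X + t) + α * (Y + t))
  have hr : Continuous r := by fun_prop
  have rX : ∀ t z, α * (r t - latVec lam z).1 + β * (r t - latVec lam z).2 =
      X + t - (rotLatVec lam α β z).1 := by
    intro t z
    simp only [r, Prod.fst_sub, Prod.snd_sub, rotLatVec_fst]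
    linear_combination (X + t) * hu
  have rY : ∀ t z, -β * (r t - latVec lam z).1 + α * (r t - latVec lam z).2 =
      Y + t - (rotLatVec lam α β z).2 := by
    intro t z
    simp only [r, Prod.fst_sub, Prod.snd_sub, rotLatVec_snd]
    linear_combination (Y + t) * hu
  have memC : ∀ t i z, r t - latVec lam z ∈ (Q i).closed ↔
      ((Q i).x ≤ X + t - (rotLatVec lam α β z).1 ∧
        X + t - (rotLatVec lam α β z).1 ≤ (Q i).x + (Q i).side) ∧
      (Q i).y ≤ Y + t - (rotLatVec lam α β z).2 ∧
        Y + t - (rotLatVec lam α β z).2 ≤ (Q i).y + (Q i).side := by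
    intro t i z
    simp only [TiltedSquare.closed, mem_ofPred_eq, hα, hβ, rX, rY]
  have memO : ∀ t i z, r t - latVec lam z ∈ (Q i).opened ↔
      ((Q i).x < X + t - (rotLatVec lam α β z).1 ∧
        X + t - (rotLatVec lam α β z).1 < (Q i).x + (Q i).side) ∧
      (Q i).y < Y + t - (rotLatVec lam α β z).2 ∧
        Y + t - (rotLatVec lam α β z).2 < (Q i).y + (Q i).side := by
    intro t i z
    simp only [TiltedSquare.opened, mem_ofPred_eq, hα, hβ, rX, rY]
  have memH : ∀ i z, ((X, Y) - rotLatVec lam α β z ∈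
      hoRect ((Q i).x, (Q i).y) ((Q i).x + (Q i).side, (Q i).y + (Q i).side)) ↔
      ((Q i).x ≤ X - (rotLatVec lam α β z).1 ∧
        X - (rotLatVec lam α β z).1 < (Q i).x + (Q i).side) ∧
      (Q i).y ≤ Y - (rotLatVec lam α β z).2 ∧
        Y - (rotLatVec lam α β z).2 < (Q i).y + (Q i).side := by
    intro i z
    simp only [hoRect, mem_prod, mem_Ico, Prod.fst_sub, Prod.snd_sub]
  have small : ∀ δ : ℝ, 0 < δ → ∀ᶠ t in nhdsWithin (0 : ℝ) (Ioi 0), 0 < t ∧ t < δ :=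
    fun δ hδ => Ioo_mem_nhdsGT hδ
  have hex : ∃ x : ι × (ℤ × ℤ), ∃ᶠ t in nhdsWithin (0 : ℝ) (Ioi 0), r t ∈ tile lam Q x := by
    obtain ⟨N, hN, hfin⟩ := locallyFinite_tile hpos Q (r 0)
    have hev : ∀ᶠ t in nhdsWithin (0 : ℝ) (Ioi 0), r t ∈ N :=
      (hr.tendsto 0).mono_left nhdsWithin_le_nhds hN
    by_contra! hno
    have hall := (Filter.eventually_all_finite hfin).mpr fun x _ => hno x
    obtain ⟨t, ht1, ht2⟩ := (hev.and hall).exists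
    obtain ⟨i, z, hiz⟩ := hT.cover (r t)
    exact ht2 (i, z) ⟨r t, hiz, ht1⟩ hiz
  obtain ⟨⟨i, z⟩, hiz⟩ := hex
  have hmem : ((X, Y) - rotLatVec lam α β z ∈
      hoRect ((Q i).x, (Q i).y) ((Q i).x + (Q i).side, (Q i).y + (Q i).side)) := by
    rw [memH]
    refine ⟨⟨?_, ?_⟩, ?_, ?_⟩
    · by_contra! h
      obtain ⟨t, ht1, ht2⟩ := (hiz.and_eventually (small _ (sub_pos.mpr h))).exists
      have := ((memC t i z).mp ht1).1.1
      linarith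
    · obtain ⟨t, ht1, ht2⟩ := (hiz.and_eventually (small _ one_pos)).exists
      have := ((memC t i z).mp ht1).1.2
      linarith
    · by_contra! h
      obtain ⟨t, ht1, ht2⟩ := (hiz.and_eventually (small _ (sub_pos.mpr h))).exists
      have := ((memC t i z).mp ht1).2.1
      linarith
    · obtain ⟨t, ht1, ht2⟩ := (hiz.and_eventually (small _ one_pos)).exists
      have := ((memC t i z).mp ht1).2.2
      linarith
  have hevO : ∀ j w, ((X, Y) - rotLatVec lam α β w ∈
      hoRect ((Q j).x, (Q j).y) ((Q j).x + (Q j).side, (Q j).y + (Q j).side)) →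
      ∀ᶠ t in nhdsWithin (0 : ℝ) (Ioi 0), r t - latVec lam w ∈ (Q j).opened := by
    intro j w h
    obtain ⟨⟨h1, h2⟩, h3, h4⟩ := (memH j w).mp h
    filter_upwards [small _ (sub_pos.mpr h2), small _ (sub_pos.mpr h4)] with t ht1 ht2
    rw [memO]
    refine ⟨⟨?_, ?_⟩, ?_, ?_⟩ <;> linarith
  refine ⟨(i, z), hmem, ?_⟩
  rintro ⟨j, w⟩ hjw
  obtain ⟨t, ht1, ht2⟩ := ((hevO i z hmem).and (hevO j w hjw)).exists
  obtain ⟨rfl, rfl⟩ := hT.disj i z j w (r t) ht1 ht2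
  rfl

theorem rotLatVec_finite {lam : ℝ} (hpos : 0 < lam) {α β : ℝ} (hα : 0 ≤ α) (hβ : 0 ≤ β)
    (hu : α ^ 2 + β ^ 2 = 1) (a b c d : ℝ × ℝ) :
    {z | ∃ p, p ∈ hoRect a b ∧ p - rotLatVec lam α β z ∈ hoRect c d}.Finite := by
  have hα1 : α ≤ 1 := by nlinarith
  have hβ1 : β ≤ 1 := by nlinarith
  set C₁ := |a.1 - d.1| + |b.1 - c.1| with hC₁
  set C₂ := |a.2 - d.2| + |b.2 - c.2| with hC₂
  refine (latVec_finite hpos (C₁ + C₂)).subset ?_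
  rintro z ⟨p, hp, hz⟩
  simp only [hoRect, mem_prod, mem_Ico, Prod.fst_sub, Prod.snd_sub] at hp hz
  set ξ := (rotLatVec lam α β z).1 with hξ
  set η := (rotLatVec lam α β z).2 with hη
  have b1 : |ξ| ≤ C₁ := by
    rw [abs_le]
    constructor <;> linarith [neg_abs_le (a.1 - d.1), le_abs_self (b.1 - c.1),
      abs_nonneg (a.1 - d.1), abs_nonneg (b.1 - c.1)]
  have b2 : |η| ≤ C₂ := by
    rw [abs_le]
    constructor <;> linarith [neg_abs_le (a.2 - d.2), le_abs_self (b.2 - c.2),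
      abs_nonneg (a.2 - d.2), abs_nonneg (b.2 - c.2)]
  have e1 : (latVec lam z).1 = α * ξ - β * η := by
    rw [hξ, hη, rotLatVec_fst, rotLatVec_snd]; linear_combination -(latVec lam z).1 * hu
  have e2 : (latVec lam z).2 = β * ξ + α * η := by
    rw [hξ, hη, rotLatVec_fst, rotLatVec_snd]; linear_combination -(latVec lam z).2 * hu
  constructor
  · rw [e1]
    refine (abs_sub _ _).trans ?_
    rw [abs_mul, abs_mul, abs_of_nonneg hα, abs_of_nonneg hβ]
    nlinarith [abs_nonneg ξ, abs_nonneg η]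
  · rw [e2]
    refine (abs_add_le _ _).trans ?_
    rw [abs_mul, abs_mul, abs_of_nonneg hα, abs_of_nonneg hβ]
    nlinarith [abs_nonneg ξ, abs_nonneg η]

/-- The `f`-area of the torus `ℝ² / 2L` in the direction `(α, β)` is nonnegative, being the sum of
the numbers `f (side) ^ 2` over the squares of the tiling. -/
theorem IsLatticeTiling.nonneg {lam : ℝ} (hpos : 0 < lam) {ι : Type} [Finite ι]
    {Q : ι → TiltedSquare} (hT : IsLatticeTiling lam Q) {α β : ℝ}
    (hα : ∀ i, (Q i).dirX = α) (hβ : ∀ i, (Q i).dirY = β) (hu : α ^ 2 + β ^ 2 = 1)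
    (hα0 : 0 < α) (hβ0 : 0 ≤ β) (f : ℝ →+ ℝ) :
    0 ≤ f α * f (lam * α) + f β * f (lam * β) := by
  have := Fintype.ofFinite ι
  have key := cut_paste f (fun i => ((Q i).x, (Q i).y))
    (fun i => ((Q i).x + (Q i).side, (Q i).y + (Q i).side))
    (fun e : Bool => if e then ((0 : ℝ), (0 : ℝ)) else (2 * α, 2 * (lam * α) - 2 * β))
    (fun e : Bool => if e then (2 * α, 2 * (lam * α)) else (2 * α + 2 * (lam * β), 2 * (lam * α)))
    (rotLatVec lam α β)
    (fun i => by
      have := (Q i).side_pos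
      exact ⟨by simp only; linarith, by simp only; linarith⟩)
    (fun e => by
      have := mul_pos hpos hα0
      have := mul_nonneg hpos.le hβ0
      rcases e
      · exact ⟨by simp; linarith, by simp; linarith⟩
      · exact ⟨by simp; linarith, by simp; linarith⟩)
    (hT.halfOpen hpos hα hβ hu)
    (fun p => by
      have := Lshape_partition (2 * α) (2 * β) (2 * (lam * β)) (2 * (lam * α)) (by positivity)
        (by positivity) (by positivity) (by positivity) p
      refine (existsUnique_congr fun x => ?_).mp this
      have e : (((x.2.1 : ℝ) * (2 * α) + x.2.2 * (2 * (lam * β)),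
          -(x.2.1 : ℝ) * (2 * β) + x.2.2 * (2 * (lam * α))) : ℝ × ℝ) =
          rotLatVec lam α β x.2 := by
        ext
        · simp only [rotLatVec_fst, latVec_apply]; ring
        · simp only [rotLatVec_snd, latVec_apply]; ring
      rw [e])
    (fun i k => rotLatVec_finite hpos hα0.le hβ0 hu _ _ _ _)
  have h2 : ∀ x, f (2 * x) = 2 * f x := fun x => by rw [two_mul, map_add, two_mul]
  simp only [map_add, map_sub, add_sub_cancel_left, Fintype.sum_bool, if_true, Bool.false_eq_true,
    if_false, map_zero, sub_zero, sub_sub_cancel, h2] at key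
  have hsum : 0 ≤ ∑ i, f (Q i).side * f (Q i).side :=
    Finset.sum_nonneg fun i _ => mul_self_nonneg _
  rw [key] at hsum
  linarith

/-- If the rectangle `1 × λ`, where `λ > 0` is irrational, admits a covering by squares
on both sides in one layer, then `λ = p ± √(q² − r²)` for some rationals `p ≥ q ≥ r ≥ 0`. -/
theorem both_sides_covering_lambda (lam : ℝ) (hirr : Irrational lam) (hpos : 0 < lam)
    (Γ : Set (Set (ℝ × ℝ))) (hΓ : IsBothSidesSquareCovering lam Γ) :
    ∃ p q r : ℚ, q ≤ p ∧ r ≤ q ∧ 0 ≤ r ∧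
      (lam = (p : ℝ) + Real.sqrt ((q : ℝ) ^ 2 - (r : ℝ) ^ 2) ∨
       lam = (p : ℝ) - Real.sqrt ((q : ℝ) ^ 2 - (r : ℝ) ^ 2)) := by
  obtain ⟨ι, hι, Q, hT⟩ := hΓ.exists_tiling hpos
  choose R hRc hRo hRX hRY using fun i => (Q i).exists_normalized
  have hTR : IsLatticeTiling lam R :=
    ⟨fun p => by simpa only [hRc] using hT.cover p,
      fun i z j w p h1 h2 => hT.disj i z j w p (hRo i ▸ h1) (hRo j ▸ h2)⟩
  obtain ⟨i₀, -, -⟩ := hTR.cover 0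
  have hpar := hTR.parallel hpos hRX hRY i₀
  exact algebra_part lam hirr hpos (R i₀).dirX (R i₀).dirY (hRX i₀).ne' fun f =>
    hTR.nonneg hpos (fun i => (hpar i).1) (fun i => (hpar i).2) (R i₀).unit (hRX i₀) (hRY i₀)
      f.toAddMonoidHom
end

section
/- Let λ > 0 be irrational and let d₀, d₁, e₀, e₁ be rational numbers satisfying e₀ + e₁λ = −λ(d₀ + d₁λ). Then exactly one of the following holds: either d₁ ≠ 0 and d₁λ² + (e₁ + d₀)λ + e₀ = 0, or d₁ = 0, e₀ = 0, e₁ = −d₀, and the function x ↦ x − (d₀ + d₁x)(e₀ + e₁x) equals x ↦ (1 + d₀²)x, a linear function of x with nonzero slope. -/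
/-!
The relation rearranges to `d₁ * lam ^ 2 + (e₁ + d₀) * lam + e₀ = 0`. If `d₁ ≠ 0` this is the first
alternative. If `d₁ = 0` it is a rational linear relation between `lam` and `1`, so irrationality
forces `e₁ + d₀ = 0` and `e₀ = 0`, and the area becomes `(1 + d₀ ^ 2) * x`. The two alternatives
disagree on whether `d₁ = 0`, so they exclude each other.
-/

/-- **Lemma 6.**  Let `λ > 0` be irrational and let `d₀, d₁, e₀, e₁` be rational numbers
satisfying `e₀ + e₁λ = −λ(d₀ + d₁λ)`.  Then exactly one of the following holds:
either `d₁ ≠ 0` and `d₁λ² + (e₁ + d₀)λ + e₀ = 0`, or `d₁ = 0`, `e₀ = 0`, `e₁ = −d₀`,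
and the function `x ↦ x − (d₀ + d₁x)(e₀ + e₁x)` equals `x ↦ (1 + d₀²)x`, a linear
function of `x` with nonzero slope. -/
theorem corner_xArea_linear_or_quadratic (lam : ℝ) (hirr : Irrational lam) (hpos : 0 < lam)
    (d₀ d₁ e₀ e₁ : ℚ)
    (hrel : (e₀ : ℝ) + (e₁ : ℝ) * lam = -(lam * ((d₀ : ℝ) + (d₁ : ℝ) * lam))) :
    Xor'
      (d₁ ≠ 0 ∧ (d₁ : ℝ) * lam ^ 2 + ((e₁ : ℝ) + (d₀ : ℝ)) * lam + (e₀ : ℝ) = 0)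
      (d₁ = 0 ∧ e₀ = 0 ∧ e₁ = -d₀ ∧
        (∀ x : ℝ, x - ((d₀ : ℝ) + (d₁ : ℝ) * x) * ((e₀ : ℝ) + (e₁ : ℝ) * x) =
          (1 + (d₀ : ℝ) ^ 2) * x) ∧
        (1 : ℚ) + d₀ ^ 2 ≠ 0) := by
  by_cases hd : d₁ = 0
  · subst hd
    have hlin : ((e₁ + d₀ : ℚ) : ℝ) * lam + (e₀ : ℝ) = 0 := by
      push_cast at hrel ⊢
      linarith
    -- A nonzero coefficient would make `lam` equal to the rational `-e₀ / (e₁ + d₀)`.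
    have hsum : e₁ + d₀ = 0 := by
      by_contra hne
      have hne' : ((e₁ + d₀ : ℚ) : ℝ) ≠ 0 := by exact_mod_cast hne
      refine hirr ⟨-e₀ / (e₁ + d₀), ?_⟩
      rw [Rat.cast_div, div_eq_iff hne', Rat.cast_neg]
      linarith
    have he₀ : e₀ = 0 := by
      rw [hsum] at hlin
      simpa using hlin
    have he₁ : e₁ = -d₀ := by linarith
    refine Or.inr ⟨⟨rfl, he₀, he₁, fun x => ?_, by positivity⟩, fun h => h.1 rfl⟩
    rw [he₀, he₁]
    push_cast
    ring
  · exact Or.inl ⟨⟨hd, by linarith⟩, fun h => hd h.1⟩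
end

section
/- Let λ be an irrational real number and let d₀, d₁, e₀, e₁ be rational numbers with d₁ ≠ 0 and d₁λ² + (e₁ + d₀)λ + e₀ = 0. If there are no rational numbers p ≥ r ≥ 0 such that λ = p + √(p² − r²) or λ = p − √(p² − r²), then either there exists a real x with x − (d₀ + d₁x)(e₀ + e₁x) < 0, or (e₀d₁ − e₁d₀ + 1)² − 4d₁e₀ < 0. -/
/-!
Suppose `S(x) = x - (d₀ + d₁x)(e₀ + e₁x)` is nonnegative everywhere and
`(e₀d₁ - e₁d₀ + 1)² - 4d₁e₀ ≥ 0`. The latter quantity is exactly the discriminant of `S`, which is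
`≤ 0` because `S ≥ 0`; so it vanishes, and `d₁e₀` is a rational square. Hence `λ` is a root of
`X² - 2pX + r²` with `p = -(e₁ + d₀)/(2d₁)` and `r = |e₀d₁ - e₁d₀ + 1| / (2|d₁|)` rational, and
`p² - r² = (λ - p)² ≥ 0`. It remains to see `p ≥ 0`: evaluating `S` at the zeros `-d₀/d₁` and
`-e₀/e₁` of the two factors gives `d₀/d₁ ≤ 0` and `e₀/e₁ ≤ 0`, and `e₀`, `d₁` have the same sign
(`e₀ = 0` would make `λ` rational), so `d₀` and `e₁` both have sign opposite to `d₁`.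
-/

/-- **Lemma 7.**  Let `λ` be irrational and let `d₀, d₁, e₀, e₁` be rational numbers with
`d₁ ≠ 0` and `d₁λ² + (e₁ + d₀)λ + e₀ = 0`.  If there are no rationals `p ≥ r ≥ 0` with
`λ = p ± √(p² − r²)`, then either the `x`-area `x − (d₀ + d₁x)(e₀ + e₁x)` is negative for
some real `x`, or `(e₀d₁ − e₁d₀ + 1)² − 4d₁e₀ < 0`. -/
theorem xArea_negative_or_discriminant (lam : ℝ) (hirr : Irrational lam)
    (d₀ d₁ e₀ e₁ : ℚ) (hd₁ : d₁ ≠ 0)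
    (hquad : (d₁ : ℝ) * lam ^ 2 + ((e₁ : ℝ) + (d₀ : ℝ)) * lam + (e₀ : ℝ) = 0)
    (hno : ¬ ∃ p r : ℚ, r ≤ p ∧ 0 ≤ r ∧
      (lam = (p : ℝ) + Real.sqrt ((p : ℝ) ^ 2 - (r : ℝ) ^ 2) ∨
       lam = (p : ℝ) - Real.sqrt ((p : ℝ) ^ 2 - (r : ℝ) ^ 2))) :
    (∃ x : ℝ, x - ((d₀ : ℝ) + (d₁ : ℝ) * x) * ((e₀ : ℝ) + (e₁ : ℝ) * x) < 0) ∨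
      (e₀ * d₁ - e₁ * d₀ + 1) ^ 2 - 4 * d₁ * e₀ < 0 := by
  by_contra hcon
  push Not at hcon
  obtain ⟨hS, hD⟩ := hcon
  -- The second quantity coincides with the discriminant of `S`, which is nonpositive.
  have hD0 : (e₀ * d₁ - e₁ * d₀ + 1) ^ 2 - 4 * d₁ * e₀ = 0 := by
    refine le_antisymm ?_ hD
    have h := discrim_le_zero (K := ℝ) (a := -(d₁ * e₁)) (b := 1 - d₀ * e₁ - d₁ * e₀)
      (c := -(d₀ * e₀)) (fun x => by linarith [hS x])
    unfold discrim at h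
    have h' : (((e₀ * d₁ - e₁ * d₀ + 1) ^ 2 - 4 * d₁ * e₀ : ℚ) : ℝ) ≤ 0 := by
      push_cast
      linarith
    exact_mod_cast h'
  have hd₁R : (d₁ : ℝ) ≠ 0 := by exact_mod_cast hd₁
  have he₀ : e₀ ≠ 0 := by
    rintro rfl
    apply hirr
    have hlam : lam ≠ 0 := hirr.ne_zero
    refine ⟨-(e₁ + d₀) / d₁, ?_⟩
    push_cast at hquad ⊢
    have h : lam * (d₁ * lam + (e₁ + d₀)) = 0 := by linarith
    have h2 := (mul_eq_zero.mp h).resolve_left hlam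
    rw [div_eq_iff hd₁R]
    linarith
  have hpos : 0 < e₀ * d₁ :=
    lt_of_le_of_ne (by nlinarith [sq_nonneg (e₀ * d₁ - e₁ * d₀ + 1)]) (mul_ne_zero he₀ hd₁).symm
  have hd : d₀ / d₁ ≤ 0 := by
    have h := hS (-(d₀ / d₁))
    rw [show (d₀ : ℝ) + d₁ * (-(d₀ / d₁)) = 0 by field_simp; ring] at h
    have h' : ((d₀ / d₁ : ℚ) : ℝ) ≤ 0 := by push_cast; linarith
    exact_mod_cast h'
  have he : e₁ / d₁ ≤ 0 := by
    rcases eq_or_ne e₁ 0 with rfl | h1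
    · simp
    have h1R : (e₁ : ℝ) ≠ 0 := by exact_mod_cast h1
    have h := hS (-(e₀ / e₁))
    rw [show (e₀ : ℝ) + e₁ * (-(e₀ / e₁)) = 0 by field_simp; ring] at h
    have h' : ((e₀ / e₁ : ℚ) : ℝ) ≤ 0 := by push_cast; linarith
    have h2 : e₀ / e₁ ≤ 0 := by exact_mod_cast h'
    have h3 : e₁ / d₁ = e₀ / e₁ * (e₁ ^ 2 / (e₀ * d₁)) := by field_simp
    rw [h3]
    exact mul_nonpos_of_nonpos_of_nonneg h2 (by positivity)
  apply hno
  obtain ⟨p, hp⟩ : ∃ p : ℚ, p = -(e₁ / d₁ + d₀ / d₁) / 2 := ⟨_, rfl⟩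
  obtain ⟨r, hr⟩ : ∃ r : ℚ, r = |(e₀ * d₁ - e₁ * d₀ + 1) / (2 * d₁)| := ⟨_, rfl⟩
  have hp0 : 0 ≤ p := by rw [hp]; linarith
  have hr0 : 0 ≤ r := by rw [hr]; exact abs_nonneg _
  have hr2 : r ^ 2 = e₀ / d₁ := by
    rw [hr, sq_abs, div_pow, show (e₀ * d₁ - e₁ * d₀ + 1) ^ 2 = 4 * d₁ * e₀ by linarith]
    field_simp
    ring
  have hr2R : (r : ℝ) ^ 2 = e₀ / d₁ := by exact_mod_cast hr2
  have hpR : (p : ℝ) = -(e₁ / d₁ + d₀ / d₁) / 2 := by rw [hp]; push_cast; ring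
  have hsq : (p : ℝ) ^ 2 - (r : ℝ) ^ 2 = (lam - p) ^ 2 := by
    have h : lam ^ 2 - 2 * p * lam + e₀ / d₁ = 0 := by
      rw [hpR]
      field_simp
      linarith
    rw [hr2R]
    linarith
  have hle : r ≤ p := by
    refine (sq_le_sq₀ hr0 hp0).mp ?_
    have h : (r : ℝ) ^ 2 ≤ (p : ℝ) ^ 2 := by linarith [sq_nonneg (lam - p)]
    exact_mod_cast h
  refine ⟨p, r, hle, hr0, ?_⟩
  rw [hsq, Real.sqrt_sq_eq_abs]
  rcases abs_choice (lam - p) with h | h <;> rw [h]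
  · left; ring
  · right; ring
end

section
/- Let λ > 0 be irrational and let d₀, d₁, e₀, e₁ be rational numbers with d₁ ≠ 0, d₁λ² + (e₁ + d₀)λ + e₀ = 0, and (e₀d₁ − e₁d₀ + 1)² − 4d₁e₀ < 0. Then there exist rational numbers p ≥ q ≥ r ≥ 0 such that λ = p + √(q² − r²) or λ = p − √(q² − r²). -/
/-!
Completing the square gives `(λ - p)² = D` with `p = -(e₁ + d₀) / (2d₁)` and `D = p² - e₀ / d₁`.
The discriminant hypothesis forces `d₁e₀ > 0`, so the product `e₀ / d₁` of the two roots is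
positive; as `λ > 0`, so is their sum `2p`, and `0 ≤ D < p²`. Factoring `D = p · (D / p)`
then exhibits `D` as the difference of squares `q² - r²` with
`q = (p + D / p) / 2` and `r = (p - D / p) / 2`, and `p ≥ q ≥ r ≥ 0` is immediate.
-/

/-- Let `λ > 0` be irrational and let `d₀, d₁, e₀, e₁` be rationals with `d₁ ≠ 0`,
`d₁λ² + (e₁ + d₀)λ + e₀ = 0`, and `(e₀d₁ − e₁d₀ + 1)² − 4d₁e₀ < 0`.  Then
`λ = p ± √(q² − r²)` for some rationals `p ≥ q ≥ r ≥ 0`. -/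
theorem lambda_form_of_discriminant (lam : ℝ) (hirr : Irrational lam) (hpos : 0 < lam)
    (d₀ d₁ e₀ e₁ : ℚ) (hd₁ : d₁ ≠ 0)
    (hquad : (d₁ : ℝ) * lam ^ 2 + ((e₁ : ℝ) + (d₀ : ℝ)) * lam + (e₀ : ℝ) = 0)
    (hdisc : (e₀ * d₁ - e₁ * d₀ + 1) ^ 2 - 4 * d₁ * e₀ < 0) :
    ∃ p q r : ℚ, q ≤ p ∧ r ≤ q ∧ 0 ≤ r ∧
      (lam = (p : ℝ) + Real.sqrt ((q : ℝ) ^ 2 - (r : ℝ) ^ 2) ∨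
       lam = (p : ℝ) - Real.sqrt ((q : ℝ) ^ 2 - (r : ℝ) ^ 2)) := by
  have hprod : 0 < d₁ * e₀ := by nlinarith [sq_nonneg (e₀ * d₁ - e₁ * d₀ + 1)]
  obtain ⟨p, hp⟩ : ∃ p : ℚ, p = -(e₁ + d₀) / (2 * d₁) := ⟨_, rfl⟩
  obtain ⟨c, hc⟩ : ∃ c : ℚ, c = e₀ / d₁ := ⟨_, rfl⟩
  have hcpos : 0 < c := by
    have h : c = d₁ * e₀ / d₁ ^ 2 := by rw [hc]; field_simp
    rw [h]; positivity
  have hcR : (0 : ℝ) < c := by exact_mod_cast hcpos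
  have hd₁R : (d₁ : ℝ) ≠ 0 := by exact_mod_cast hd₁
  have hmonic : lam ^ 2 - 2 * p * lam + c = 0 := by
    rw [hp, hc]
    push_cast
    field_simp
    linarith
  have hppos : 0 < p := by
    have h : (0 : ℝ) < p := by
      by_contra! h
      nlinarith [mul_nonneg (neg_nonneg.2 h) hpos.le, sq_nonneg lam]
    exact_mod_cast h
  have hD : 0 ≤ p ^ 2 - c := by
    have h : (0 : ℝ) ≤ p ^ 2 - c := by nlinarith [sq_nonneg (lam - p)]
    exact_mod_cast h
  have hDp : 0 ≤ (p ^ 2 - c) / p := by positivity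
  have hDp' : (p ^ 2 - c) / p ≤ p := by
    rw [div_le_iff₀ hppos]; nlinarith
  refine ⟨p, (p + (p ^ 2 - c) / p) / 2, (p - (p ^ 2 - c) / p) / 2,
    by linarith, by linarith, by linarith, ?_⟩
  have hpR : (p : ℝ) ≠ 0 := by exact_mod_cast hppos.ne'
  have hsq : (((p + (p ^ 2 - c) / p) / 2 : ℚ) : ℝ) ^ 2 - (((p - (p ^ 2 - c) / p) / 2 : ℚ) : ℝ) ^ 2
      = (lam - p) ^ 2 := by
    have h : (lam - p) ^ 2 = (p : ℝ) ^ 2 - c := by linarith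
    rw [h]
    push_cast
    field_simp
    ring
  rw [hsq, Real.sqrt_sq_eq_abs]
  rcases abs_cases (lam - (p : ℝ)) with ⟨h, -⟩ | ⟨h, -⟩
  · left; rw [h]; ring
  · right; rw [h]; ring
end

section
/- Let λ > 0 be irrational and let d₀, d₁, e₀, e₁ be rational numbers with d₁ ≠ 0 and d₁λ² + (e₁ + d₀)λ + e₀ = 0. If x − (d₀ + d₁x)(e₀ + e₁x) ≥ 0 for every real x, then there exist rational numbers p ≥ q ≥ r ≥ 0 such that λ = p + √(q² − r²) or λ = p − √(q² − r²). -/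
/-!
Completing the square gives `(λ - p)² = D` with `p = -(e₁ + d₀)/(2d₁)` and `p² - D = e₀/d₁`.
Nonnegativity of the quadratic `x - (d₀ + d₁x)(e₀ + e₁x)` fixes the signs of its extreme
coefficients and of its discriminant, and these force `e₀/d₁ > 0` and `p > 0`
(`signs_of_nonneg`), that is, `0 < √D < p`. Finally, a rational `D` with `0 < √D < p` can be
written as `q² - r²` with `p ≥ q ≥ r ≥ 0` (`exists_sq_sub_sq`): factor
`D = s · (D/s)` with `s` rational slightly below `√D` and take the half-sum and the
half-difference of the factors.
-/

/-- If `x - (d₀ + d₁x)(e₀ + e₁x)` is nonnegative on `ℝ`, its leading and constant coefficients and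
its discriminant have known signs. The discriminant bound reads `(1 - A - B)² ≤ 4AB` with
`A = d₀e₁` and `B = d₁e₀`, which excludes `B < 0`; the coefficient signs give the rest. -/
lemma signs_of_nonneg {d₀ d₁ e₀ e₁ : ℝ} (he₀ : e₀ ≠ 0) (hd₁ : d₁ ≠ 0)
    (h : ∀ x : ℝ, 0 ≤ x - (d₀ + d₁ * x) * (e₀ + e₁ * x)) :
    0 < d₁ * e₀ ∧ d₁ * (e₁ + d₀) ≤ 0 := by
  have h0 : d₀ * e₀ ≤ 0 := by
    have := h 0
    simp at this
    exact this
  have h1 : d₁ * e₁ ≤ 0 := by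
    by_contra! hc
    -- At this `t ≥ 1` the even part of the quadratic is negative.
    set t : ℝ := 1 + (-(d₀ * e₀)) / (d₁ * e₁) with ht
    have ht1 : 1 ≤ t := by
      have : 0 ≤ (-(d₀ * e₀)) / (d₁ * e₁) := div_nonneg (by linarith) hc.le
      linarith
    have ht2 : (d₁ * e₁) * t = d₁ * e₁ - d₀ * e₀ := by
      rw [ht, mul_add, mul_div_cancel₀ _ hc.ne']
      ring
    have ht3 : (d₁ * e₁) * t ≤ (d₁ * e₁) * (t * t) :=
      mul_le_mul_of_nonneg_left (by nlinarith) hc.le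
    have hp := h t
    have hm := h (-t)
    nlinarith
  have hdisc := discrim_le_zero (a := -(d₁ * e₁)) (b := 1 - d₀ * e₁ - d₁ * e₀) (c := -(d₀ * e₀))
    (fun x => by linarith [h x])
  have hAB : (1 - d₀ * e₁ - d₁ * e₀) ^ 2 ≤ 4 * ((d₀ * e₁) * (d₁ * e₀)) := by
    unfold discrim at hdisc
    linarith
  have hB0 : d₁ * e₀ ≠ 0 := mul_ne_zero hd₁ he₀
  have hB : 0 < d₁ * e₀ := by
    by_contra! hc
    have hB : d₁ * e₀ < 0 := lt_of_le_of_ne hc hB0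
    have hA : d₀ * e₁ ≤ 0 := by
      by_contra! hA
      nlinarith [mul_neg_of_pos_of_neg hA hB, sq_nonneg (1 - d₀ * e₁ - d₁ * e₀)]
    nlinarith [sq_nonneg (d₀ * e₁ - d₁ * e₀)]
  refine ⟨hB, ?_⟩
  have hd : d₁ * d₀ ≤ 0 := by
    by_contra! hc
    -- `(d₀e₀) d₁² = (d₁e₀)(d₁d₀)` would be positive.
    nlinarith [mul_pos hB hc, mul_nonneg (neg_nonneg.2 h0) (sq_nonneg d₁)]
  linarith

/-- The identity `D = ((D/s + s)/2)² - ((D/s - s)/2)²` has `s ≤ D/s` for `s ≤ √D`, and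
`D/s + s ≤ 2p` for `s` between the roots `p ± √(p² - D)`. Since `√D` lies strictly between
these roots, a rational `s` satisfying both exists. -/
lemma exists_sq_sub_sq {p D : ℚ} {w : ℝ} (hw : 0 < w) (hwD : w ^ 2 = (D : ℝ)) (hp : 0 < p)
    (hDp : D < p ^ 2) : ∃ q r : ℚ, q ≤ p ∧ r ≤ q ∧ 0 ≤ r ∧ q ^ 2 - r ^ 2 = D := by
  have hpR : (0 : ℝ) < p := by exact_mod_cast hp
  have hDpR : (D : ℝ) < (p : ℝ) ^ 2 := by exact_mod_cast hDp
  set v := Real.sqrt ((p : ℝ) ^ 2 - D) with hv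
  have hv2 : v ^ 2 = (p : ℝ) ^ 2 - D := Real.sq_sqrt (by linarith)
  have hv0 : 0 < v := Real.sqrt_pos.2 (by linarith)
  have hvp : v < p := by nlinarith [pow_pos hw 2]
  have hwp : w < p := by nlinarith
  have hlt : (p : ℝ) - v < w := by nlinarith [mul_pos hv0 hw]
  obtain ⟨s, hs1, hs2⟩ := exists_rat_btwn hlt
  have hs0R : (0 : ℝ) < s := by linarith
  have hs0 : 0 < s := by exact_mod_cast hs0R
  have hsD : s * s ≤ D := by
    have : (s : ℝ) * s ≤ D := by nlinarith
    exact_mod_cast this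
  have hsp : s * s + D ≤ 2 * p * s := by
    have : (s : ℝ) * s + D ≤ 2 * p * s := by nlinarith
    exact_mod_cast this
  have h1 : s ≤ D / s := (le_div_iff₀ hs0).2 hsD
  have h2 : D / s ≤ 2 * p - s := (div_le_iff₀ hs0).2 (by linarith)
  refine ⟨(D / s + s) / 2, (D / s - s) / 2, by linarith, by linarith, by linarith, ?_⟩
  field_simp
  ring

/-- Let `λ > 0` be irrational and let `d₀, d₁, e₀, e₁` be rationals with `d₁ ≠ 0` and
`d₁λ² + (e₁ + d₀)λ + e₀ = 0`.  If `x − (d₀ + d₁x)(e₀ + e₁x) ≥ 0` for every real `x`,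
then `λ = p ± √(q² − r²)` for some rationals `p ≥ q ≥ r ≥ 0`. -/
theorem lambda_form_of_nonneg_xArea (lam : ℝ) (hirr : Irrational lam) (hpos : 0 < lam)
    (d₀ d₁ e₀ e₁ : ℚ) (hd₁ : d₁ ≠ 0)
    (hquad : (d₁ : ℝ) * lam ^ 2 + ((e₁ : ℝ) + (d₀ : ℝ)) * lam + (e₀ : ℝ) = 0)
    (hnonneg : ∀ x : ℝ, 0 ≤ x - ((d₀ : ℝ) + (d₁ : ℝ) * x) * ((e₀ : ℝ) + (e₁ : ℝ) * x)) :
    ∃ p q r : ℚ, q ≤ p ∧ r ≤ q ∧ 0 ≤ r ∧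
      (lam = (p : ℝ) + Real.sqrt ((q : ℝ) ^ 2 - (r : ℝ) ^ 2) ∨
       lam = (p : ℝ) - Real.sqrt ((q : ℝ) ^ 2 - (r : ℝ) ^ 2)) := by
  have hd₁R : (d₁ : ℝ) ≠ 0 := by exact_mod_cast hd₁
  have he₀ : (e₀ : ℝ) ≠ 0 := by
    intro he
    -- With `e₀ = 0`, dividing by `λ` makes `λ` rational.
    have hlin : lam * ((d₁ : ℝ) * lam + (e₁ + d₀)) = 0 := by linarith
    have hlin' := (mul_eq_zero.1 hlin).resolve_left hpos.ne'
    apply hirr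
    refine ⟨-(e₁ + d₀) / d₁, ?_⟩
    push_cast
    rw [div_eq_iff hd₁R]
    linarith
  obtain ⟨hB, hsum⟩ := signs_of_nonneg he₀ hd₁R hnonneg
  have hsum' : (d₁ : ℝ) * (e₁ + d₀) < 0 := by
    refine lt_of_le_of_ne hsum fun h => ?_
    -- Otherwise `d₁² λ² + d₁ e₀ = 0`, a sum of two positive terms.
    have hmul : (d₁ : ℝ) * (d₁ * lam ^ 2 + (e₁ + d₀) * lam + e₀) = 0 := by rw [hquad, mul_zero]
    have hexp : ((d₁ : ℝ) * lam) ^ 2 + d₁ * (e₁ + d₀) * lam + d₁ * e₀ = 0 := by linarith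
    rw [h] at hexp
    nlinarith [sq_nonneg ((d₁ : ℝ) * lam)]
  have hBQ : 0 < d₁ * e₀ := by exact_mod_cast hB
  have hsumQ : d₁ * (e₁ + d₀) < 0 := by exact_mod_cast hsum'
  have hd₁sq : 0 < d₁ ^ 2 := by positivity
  obtain ⟨p, hp⟩ : ∃ p : ℚ, p = -(e₁ + d₀) / (2 * d₁) := ⟨_, rfl⟩
  have hp0 : 0 < p := by
    have : p = -(d₁ * (e₁ + d₀)) / (2 * d₁ ^ 2) := by
      rw [hp]
      field_simp
    rw [this]
    exact div_pos (by linarith) (by linarith)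
  have hc0 : 0 < e₀ / d₁ := by
    have : e₀ / d₁ = d₁ * e₀ / d₁ ^ 2 := by field_simp
    rw [this]
    exact div_pos hBQ hd₁sq
  have hsq : |lam - p| ^ 2 = ((p ^ 2 - e₀ / d₁ : ℚ) : ℝ) := by
    have hlam : lam ^ 2 = 2 * (p : ℝ) * lam - e₀ / d₁ := by
      rw [hp]
      push_cast
      field_simp
      linarith
    rw [sq_abs]
    push_cast
    linarith
  have hne : lam - p ≠ 0 := sub_ne_zero.2 (hirr.ne_rat p)
  obtain ⟨q, r, hqp, hrq, hr, hqr⟩ :=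
    exists_sq_sub_sq (abs_pos.2 hne) hsq hp0 (by linarith)
  refine ⟨p, q, r, hqp, hrq, hr, ?_⟩
  have hroot : Real.sqrt ((q : ℝ) ^ 2 - (r : ℝ) ^ 2) = |lam - p| := by
    have : (q : ℝ) ^ 2 - (r : ℝ) ^ 2 = |lam - p| ^ 2 := by
      rw [hsq, ← hqr]
      push_cast
      rfl
    rw [this, Real.sqrt_sq (abs_nonneg _)]
  rw [hroot]
  rcases abs_choice (lam - p) with h | h <;> rw [h]
  · left
    ring
  · right
    ring
end
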